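/- arXiv:1201.0566 — 7 statements merged into one kernel-verified Lean document; each statement's English description precedes it below -/
import Mathlib

section
/- For any optimal solution (x*, a*, b*) of the problem (OPT2), there exist vectors m^I, m^D ∈ ℝ^N with |m^I_i| ≤ U^I and |m^D_i| ≤ U^D for all i, such that a*_i = m^I_i x*_i and b*_i = m^D_i x*_i for all i, and the triple (x*, m^I, m^D) is an optimal solution of the problem (OPT1); in particular x* attains the optimal value of (OPT1). -/
open Finset

/-- The ℓ2 (Euclidean) norm of a finitely-indexed real vector. -/
noncomputable def l2norm {ι : Type*} [Fintype ι] (v : ι → ℝ) : ℝ :=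
  Real.sqrt (∑ i, v i ^ 2)

/-- Feasibility for problem (OPT2). -/
def OPT2Feasible {n N : ℕ} (ΦI ΦD : Matrix (Fin n) (Fin N) ℝ) (yI yD : Fin n → ℝ)
    (εI εD UI UD : ℝ) (x a b : Fin N → ℝ) : Prop :=
  (∀ i, 0 ≤ x i ∧ x i ≤ 1) ∧
  l2norm (yI - ΦI.mulVec a) ≤ εI ∧
  l2norm (yD - ΦD.mulVec b) ≤ εD ∧
  (∀ i, |a i| ≤ UI * x i) ∧
  (∀ i, |b i| ≤ UD * x i)

/-- Optimality for problem (OPT2). -/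
def OPT2Optimal {n N : ℕ} (ΦI ΦD : Matrix (Fin n) (Fin N) ℝ) (yI yD : Fin n → ℝ)
    (εI εD UI UD : ℝ) (x a b : Fin N → ℝ) : Prop :=
  OPT2Feasible ΦI ΦD yI yD εI εD UI UD x a b ∧
  ∀ x' a' b' : Fin N → ℝ, OPT2Feasible ΦI ΦD yI yD εI εD UI UD x' a' b' →
    ∑ i, x i ≤ ∑ i, x' i

/-- Feasibility for problem (OPT1). -/
def OPT1Feasible {n N : ℕ} (ΦI ΦD : Matrix (Fin n) (Fin N) ℝ) (yI yD : Fin n → ℝ)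
    (εI εD UI UD : ℝ) (x mI mD : Fin N → ℝ) : Prop :=
  (∀ i, 0 ≤ x i ∧ x i ≤ 1) ∧
  l2norm (yI - ΦI.mulVec (fun i => mI i * x i)) ≤ εI ∧
  l2norm (yD - ΦD.mulVec (fun i => mD i * x i)) ≤ εD ∧
  (∀ i, |mI i| ≤ UI) ∧
  (∀ i, |mD i| ≤ UD)

/-- Optimality for problem (OPT1). -/
def OPT1Optimal {n N : ℕ} (ΦI ΦD : Matrix (Fin n) (Fin N) ℝ) (yI yD : Fin n → ℝ)
    (εI εD UI UD : ℝ) (x mI mD : Fin N → ℝ) : Prop :=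
  OPT1Feasible ΦI ΦD yI yD εI εD UI UD x mI mD ∧
  ∀ x' mI' mD' : Fin N → ℝ, OPT1Feasible ΦI ΦD yI yD εI εD UI UD x' mI' mD' →
    ∑ i, x i ≤ ∑ i, x' i

/-!
The map `(x, mI, mD) ↦ (x, mI * x, mD * x)` sends the OPT1-feasible triples onto the OPT2-feasible
ones and keeps `x`, hence the objective `∑ i, x i`. So every OPT1-feasible preimage of an
OPT2-optimal triple is OPT1-optimal.
-/

theorem exists_abs_le_and_eq_mul {K : Type*} [Field K] [LinearOrder K] [IsStrictOrderedRing K]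
    {c u x : K} (hu : 0 ≤ u) (hx : 0 ≤ x) (hc : |c| ≤ u * x) : ∃ m, |m| ≤ u ∧ c = m * x := by
  -- If `x = 0`, then `c = 0` as well, and the junk value `c / x = 0` is a valid multiplier.
  have hc_zero (h : x = 0) : c = 0 := by simpa [h] using hc
  refine ⟨c / x, ?_, (div_mul_cancel_of_imp hc_zero).symm⟩
  rw [abs_div, abs_of_nonneg hx]
  exact div_le_of_le_mul₀ hx hu hc

theorem abs_mul_le_mul_of_abs_le {R : Type*} [Ring R] [LinearOrder R] [IsOrderedRing R]
    {m u x : R} (hx : 0 ≤ x) (hm : |m| ≤ u) : |m * x| ≤ u * x := by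
  rw [abs_mul, abs_of_nonneg hx]
  exact mul_le_mul_of_nonneg_right hm hx

section Feasibility

variable {n N : ℕ} {ΦI ΦD : Matrix (Fin n) (Fin N) ℝ} {yI yD : Fin n → ℝ}
  {εI εD UI UD : ℝ} {x a b mI mD : Fin N → ℝ}

theorem OPT1Feasible.opt2Feasible (h : OPT1Feasible ΦI ΦD yI yD εI εD UI UD x mI mD) :
    OPT2Feasible ΦI ΦD yI yD εI εD UI UD x (fun i => mI i * x i) (fun i => mD i * x i) := by
  obtain ⟨hx, hI, hD, hmI, hmD⟩ := h
  exact ⟨hx, hI, hD, fun i => abs_mul_le_mul_of_abs_le (hx i).1 (hmI i),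
    fun i => abs_mul_le_mul_of_abs_le (hx i).1 (hmD i)⟩

theorem OPT2Feasible.exists_opt1Feasible (hUI : 0 ≤ UI) (hUD : 0 ≤ UD)
    (h : OPT2Feasible ΦI ΦD yI yD εI εD UI UD x a b) :
    ∃ mI mD : Fin N → ℝ, (∀ i, a i = mI i * x i) ∧ (∀ i, b i = mD i * x i) ∧
      OPT1Feasible ΦI ΦD yI yD εI εD UI UD x mI mD := by
  obtain ⟨hx, hI, hD, ha, hb⟩ := h
  choose mI hmI ha_eq using fun i => exists_abs_le_and_eq_mul hUI (hx i).1 (ha i)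
  choose mD hmD hb_eq using fun i => exists_abs_le_and_eq_mul hUD (hx i).1 (hb i)
  rw [funext ha_eq] at hI
  rw [funext hb_eq] at hD
  exact ⟨mI, mD, ha_eq, hb_eq, hx, hI, hD, hmI, hmD⟩

theorem OPT2Optimal.opt1Optimal (hopt : OPT2Optimal ΦI ΦD yI yD εI εD UI UD x a b)
    (hfeas : OPT1Feasible ΦI ΦD yI yD εI εD UI UD x mI mD) :
    OPT1Optimal ΦI ΦD yI yD εI εD UI UD x mI mD :=
  ⟨hfeas, fun x' _ _ hfeas' => hopt.2 x' _ _ hfeas'.opt2Feasible⟩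

end Feasibility

/-- For any optimal solution `(x*, a*, b*)` of (OPT2), there exist magnitude vectors
`mI, mD` with `|mI i| ≤ UI`, `|mD i| ≤ UD`, `a* i = mI i * x* i` and `b* i = mD i * x* i`,
such that `(x*, mI, mD)` is an optimal solution of (OPT1). -/
theorem opt2_optimal_gives_opt1_optimal {n N : ℕ}
    (ΦI ΦD : Matrix (Fin n) (Fin N) ℝ) (yI yD : Fin n → ℝ)
    (εI εD UI UD : ℝ) (hεI : 0 ≤ εI) (hεD : 0 ≤ εD) (hUI : 0 < UI) (hUD : 0 < UD)
    (x a b : Fin N → ℝ)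
    (hopt : OPT2Optimal ΦI ΦD yI yD εI εD UI UD x a b) :
    ∃ mI mD : Fin N → ℝ,
      (∀ i, |mI i| ≤ UI) ∧ (∀ i, |mD i| ≤ UD) ∧
      (∀ i, a i = mI i * x i) ∧ (∀ i, b i = mD i * x i) ∧
      OPT1Optimal ΦI ΦD yI yD εI εD UI UD x mI mD := by
  obtain ⟨mI, mD, ha, hb, hfeas⟩ := hopt.1.exists_opt1Feasible hUI.le hUD.le
  have ⟨_, _, _, hmI, hmD⟩ := hfeas
  exact ⟨mI, mD, hmI, hmD, ha, hb, hopt.opt1Optimal hfeas⟩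
end

section
/- Let A ∈ ℝ^{m×n} be a matrix whose columns φ_1, …, φ_n all have unit ℓ2 norm, and let μ = max_{i≠j} |⟨φ_i, φ_j⟩| be its coherence. Then for every index set T ⊆ {1,…,n} with |T| ≤ S and every coefficient vector s indexed by T, (1 − μ(S−1)) ‖s‖₂² ≤ ‖Σ_{j∈T} s_j φ_j‖₂² ≤ (1 + μ(S−1)) ‖s‖₂²; that is, δ_S = μ(S−1) satisfies the S-restricted isometry inequality for A. -/
open Finset

/-!
Expanding `‖∑ s_j φ_j‖²`, the diagonal contributes `∑ |s_j|²` because the columns are unit vectors,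
and the off-diagonal part is at most `μ ∑_{i ≠ j} |s_i| |s_j| = μ ((∑ |s_j|)² - ∑ |s_j|²)`, which is
at most `μ (|T| - 1) ∑ |s_j|²` by Cauchy–Schwarz.
-/

open scoped InnerProductSpace

section OffDiag

variable {ι : Type*}

theorem sum_product_self_eq_sum_add_sum_offDiag {M : Type*} [AddCommMonoid M] (T : Finset ι)
    (f : ι × ι → M) : ∑ p ∈ T ×ˢ T, f p = ∑ i ∈ T, f (i, i) + ∑ p ∈ T.offDiag, f p := by
  classical
  rw [← diag_union_offDiag, sum_union (disjoint_diag_offDiag T), sum_diag]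

theorem sum_offDiag_mul_le {R : Type*} [CommRing R] [LinearOrder R] [IsStrictOrderedRing R]
    (T : Finset ι) (a : ι → R) :
    ∑ p ∈ T.offDiag, a p.1 * a p.2 ≤ ((#T : R) - 1) * ∑ i ∈ T, a i ^ 2 := by
  have hsplit : (∑ i ∈ T, a i) ^ 2 = ∑ i ∈ T, a i ^ 2 + ∑ p ∈ T.offDiag, a p.1 * a p.2 := by
    simp only [sq, sum_mul_sum, ← sum_product', sum_product_self_eq_sum_add_sum_offDiag]
  have hcauchy : (∑ i ∈ T, a i) ^ 2 ≤ #T * ∑ i ∈ T, a i ^ 2 := sq_sum_le_card_mul_sum_sq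
  linarith

end OffDiag

section Coherence

variable (𝕜 : Type*) {ι E : Type*} [RCLike 𝕜] [SeminormedAddCommGroup E] [InnerProductSpace 𝕜 E]

/-- The coherence of the family `φ` is at most `μ`. The coherence of a family with fewer than two
members is taken to be `0`, hence the condition `0 ≤ μ`. -/
structure CoherenceLE (φ : ι → E) (μ : ℝ) : Prop where
  nonneg : 0 ≤ μ
  norm_inner_le : Pairwise fun i j => ‖⟪φ i, φ j⟫_𝕜‖ ≤ μ

/-- The `S`-restricted isometry inequality with constant `δ` for the family `φ` of columns; the
restricted isometry constant `δ_S` is the least such `δ`. A coefficient vector indexed by `T` is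
encoded as a function on all of `ι`, of which only the values on `T` matter. -/
def RestrictedIsometry (φ : ι → E) (S : ℕ) (δ : ℝ) : Prop :=
  ∀ T : Finset ι, #T ≤ S → ∀ s : ι → 𝕜,
    (1 - δ) * ∑ j ∈ T, ‖s j‖ ^ 2 ≤ ‖∑ j ∈ T, s j • φ j‖ ^ 2 ∧
    ‖∑ j ∈ T, s j • φ j‖ ^ 2 ≤ (1 + δ) * ∑ j ∈ T, ‖s j‖ ^ 2

theorem norm_sum_sq_eq_sum_add_sum_offDiag (T : Finset ι) (v : ι → E) :
    ‖∑ j ∈ T, v j‖ ^ 2 =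
      ∑ j ∈ T, ‖v j‖ ^ 2 + ∑ p ∈ T.offDiag, RCLike.re ⟪v p.1, v p.2⟫_𝕜 := by
  rw [norm_sq_eq_re_inner (𝕜 := 𝕜), sum_inner]
  simp only [inner_sum, ← sum_product', sum_product_self_eq_sum_add_sum_offDiag, map_add, map_sum,
    norm_sq_eq_re_inner (𝕜 := 𝕜)]

theorem abs_norm_sum_sq_sub_sum_norm_sq_le (T : Finset ι) (v : ι → E) :
    |‖∑ j ∈ T, v j‖ ^ 2 - ∑ j ∈ T, ‖v j‖ ^ 2| ≤ ∑ p ∈ T.offDiag, ‖⟪v p.1, v p.2⟫_𝕜‖ := by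
  rw [norm_sum_sq_eq_sum_add_sum_offDiag 𝕜, add_sub_cancel_left]
  exact (abs_sum_le_sum_abs _ _).trans (sum_le_sum fun _ _ => RCLike.abs_re_le_norm _)

variable {𝕜} {φ : ι → E} {μ : ℝ}

theorem CoherenceLE.of_isGreatest
    (hμ : IsGreatest {r : ℝ | ∃ i j, i ≠ j ∧ r = ‖⟪φ i, φ j⟫_𝕜‖} μ) : CoherenceLE 𝕜 φ μ where
  nonneg := by
    obtain ⟨i, j, -, rfl⟩ := hμ.1
    exact norm_nonneg _
  norm_inner_le i j hij := hμ.2 ⟨i, j, hij, rfl⟩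

theorem CoherenceLE.norm_inner_smul_smul_le (hμ : CoherenceLE 𝕜 φ μ) (s : ι → 𝕜) {i j : ι}
    (hij : i ≠ j) : ‖⟪s i • φ i, s j • φ j⟫_𝕜‖ ≤ μ * (‖s i‖ * ‖s j‖) :=
  calc ‖⟪s i • φ i, s j • φ j⟫_𝕜‖ = ‖⟪φ i, φ j⟫_𝕜‖ * (‖s i‖ * ‖s j‖) := by
        rw [inner_smul_left, inner_smul_right, norm_mul, norm_mul, RCLike.norm_conj]
        ring
    _ ≤ μ * (‖s i‖ * ‖s j‖) := by
        gcongr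
        exact hμ.norm_inner_le hij

theorem CoherenceLE.abs_norm_sum_smul_sq_sub_le (hμ : CoherenceLE 𝕜 φ μ) (T : Finset ι)
    (s : ι → 𝕜) :
    |‖∑ j ∈ T, s j • φ j‖ ^ 2 - ∑ j ∈ T, ‖s j • φ j‖ ^ 2| ≤
      μ * (#T - 1) * ∑ j ∈ T, ‖s j‖ ^ 2 :=
  calc |‖∑ j ∈ T, s j • φ j‖ ^ 2 - ∑ j ∈ T, ‖s j • φ j‖ ^ 2|
      ≤ ∑ p ∈ T.offDiag, ‖⟪s p.1 • φ p.1, s p.2 • φ p.2⟫_𝕜‖ :=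
        abs_norm_sum_sq_sub_sum_norm_sq_le 𝕜 T fun j => s j • φ j
    _ ≤ ∑ p ∈ T.offDiag, μ * (‖s p.1‖ * ‖s p.2‖) :=
        sum_le_sum fun _ hp => hμ.norm_inner_smul_smul_le s (mem_offDiag.1 hp).2.2
    _ = μ * ∑ p ∈ T.offDiag, ‖s p.1‖ * ‖s p.2‖ := (mul_sum ..).symm
    _ ≤ μ * ((#T - 1) * ∑ j ∈ T, ‖s j‖ ^ 2) :=
        mul_le_mul_of_nonneg_left (sum_offDiag_mul_le T fun j => ‖s j‖) hμ.nonneg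
    _ = μ * (#T - 1) * ∑ j ∈ T, ‖s j‖ ^ 2 := (mul_assoc ..).symm

theorem coherence_satisfies_RIP_general (hunit : ∀ j, ‖φ j‖ = 1) (hμ : CoherenceLE 𝕜 φ μ)
    (S : ℕ) : RestrictedIsometry 𝕜 φ S (μ * (S - 1)) := by
  intro T hT s
  have hdiag : ∑ j ∈ T, ‖s j • φ j‖ ^ 2 = ∑ j ∈ T, ‖s j‖ ^ 2 := by
    simp only [norm_smul, hunit, mul_one]
  have hdev : |‖∑ j ∈ T, s j • φ j‖ ^ 2 - ∑ j ∈ T, ‖s j‖ ^ 2| ≤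
      μ * (S - 1) * ∑ j ∈ T, ‖s j‖ ^ 2 := by
    rw [← hdiag]
    refine (hμ.abs_norm_sum_smul_sq_sub_le T s).trans ?_
    rw [hdiag]
    have hμ_nonneg := hμ.nonneg
    gcongr
  obtain ⟨hlower, hupper⟩ := abs_le.1 hdev
  constructor <;> linarith

end Coherence

section Columns

variable {𝕜 m n : Type*}

/-- The `j`-th column of `A` as a vector with the `ℓ²` norm, as opposed to the supremum norm that
`A.col j : m → 𝕜` carries. -/
def euclideanCol (A : Matrix m n 𝕜) (j : n) : EuclideanSpace 𝕜 m :=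
  WithLp.toLp 2 (A.col j)

variable [RCLike 𝕜] [Fintype m]

theorem norm_euclideanCol_eq_one_iff {A : Matrix m n 𝕜} {j : n} :
    ‖euclideanCol A j‖ = 1 ↔ ∑ i, ‖A i j‖ ^ 2 = 1 := by
  rw [EuclideanSpace.norm_eq, Real.sqrt_eq_one]
  rfl

theorem norm_sum_smul_euclideanCol_sq (A : Matrix m n 𝕜) (T : Finset n) (s : n → 𝕜) :
    ‖∑ j ∈ T, s j • euclideanCol A j‖ ^ 2 = ∑ i, ‖∑ j ∈ T, s j * A i j‖ ^ 2 := by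
  simp [EuclideanSpace.norm_sq_eq, euclideanCol]

theorem real_inner_euclideanCol (A : Matrix m n ℝ) (i j : n) :
    ⟪euclideanCol A i, euclideanCol A j⟫_ℝ = ∑ k, A k i * A k j := by
  simp [euclideanCol, PiLp.inner_apply, mul_comm]

theorem coherenceLE_euclideanCol_of_isGreatest {A : Matrix m n ℝ} {μ : ℝ}
    (hμ : IsGreatest {r : ℝ | ∃ i j, i ≠ j ∧ r = |∑ k, A k i * A k j|} μ) :
    CoherenceLE ℝ (euclideanCol A) μ :=
  .of_isGreatest <| by simpa only [real_inner_euclideanCol, Real.norm_eq_abs] using hμ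

end Columns

/-- Let `A` be a real `m × n` matrix whose columns all have unit ℓ2 norm, and let `μ` be its
coherence, i.e. the maximum of `|⟨φ_i, φ_j⟩|` over pairs of distinct columns. Then for every
index set `T` with `|T| ≤ S` and every coefficient vector `s` (supported on `T`),
`(1 − μ(S−1)) ‖s‖₂² ≤ ‖Σ_{j∈T} s_j φ_j‖₂² ≤ (1 + μ(S−1)) ‖s‖₂²`; that is, `δ_S = μ(S−1)`
satisfies the `S`-restricted isometry inequality for `A`. -/
theorem coherence_satisfies_RIP {m n : ℕ} (A : Matrix (Fin m) (Fin n) ℝ)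
    (hunit : ∀ j : Fin n, ∑ i, (A i j) ^ 2 = 1)
    (μ : ℝ)
    (hμ : IsGreatest {r : ℝ | ∃ i j : Fin n, i ≠ j ∧ r = |∑ k, A k i * A k j|} μ)
    (S : ℕ) (T : Finset (Fin n)) (hT : T.card ≤ S) (s : Fin n → ℝ) :
    (1 - μ * ((S : ℝ) - 1)) * ∑ j ∈ T, s j ^ 2 ≤ ∑ i, (∑ j ∈ T, s j * A i j) ^ 2 ∧
    ∑ i, (∑ j ∈ T, s j * A i j) ^ 2 ≤ (1 + μ * ((S : ℝ) - 1)) * ∑ j ∈ T, s j ^ 2 := by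
  have hnorm (j : Fin n) : ‖euclideanCol A j‖ = 1 := by
    simpa only [norm_euclideanCol_eq_one_iff, Real.norm_eq_abs, sq_abs] using hunit j
  simpa only [norm_sum_smul_euclideanCol_sq, Real.norm_eq_abs, sq_abs] using
    coherence_satisfies_RIP_general hnorm (coherenceLE_euclideanCol_of_isGreatest hμ) S T hT s
end

section
/- Let (a⁰, b⁰) be supported on T₀ and satisfy the data-fidelity constraints ‖y^I − Φ^I a⁰‖₂ ≤ η f₀ and ‖y^D − Φ^D b⁰‖₂ ≤ η f₀ as well as |a⁰_i| ≤ f₀ and |b⁰_i| ≤ f₀ for all i, where ‖y^I‖₂ = ‖y^D‖₂ = f₀ and 0 ≤ η < 1. Take U^I = U^D = U = f₀ and ε^I = ε^D = η f₀ in (OPT2), and let (x*, a*, b*) be an optimal solution of (OPT2). Let γ = 1 − min_{i∈T₀} α_i, where α_i = min{|a⁰_i|, |b⁰_i|} / max{|a⁰_i|, |b⁰_i|} for i ∈ T₀. Suppose the block-diagonal matrix A = diag(Φ^I, Φ^D) has restricted isometry constants δ_M and δ_{M+|T₀|} for some M ≥ 1 with √(M(1−δ_{M+|T₀|})) − √(|T₀|(1+δ_M))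 > 0. Then ‖[a⁰; b⁰] − [a*; b*]‖₂² ≤ [ (|T₀|/M)(C + γ√|T₀|)² + C² ] f₀², where C = (4η√M + γ|T₀|√(1+δ_M)) / (√(M(1−δ_{M+|T₀|})) − √(|T₀|(1+δ_M))). -/
open Finset

/-- `A` satisfies the `S`-restricted isometry inequality with constant `δ`:
for every index set `T` with `|T| ≤ S` and every vector `s` supported on `T`,
`(1−δ)‖s‖₂² ≤ ‖A s‖₂² ≤ (1+δ)‖s‖₂²`. -/
def RIPBound {κ ι : Type*} [Fintype κ] [Fintype ι] [DecidableEq ι]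
    (A : Matrix κ ι ℝ) (S : ℕ) (δ : ℝ) : Prop :=
  ∀ (T : Finset ι) (s : ι → ℝ), T.card ≤ S → (∀ j ∉ T, s j = 0) →
    (1 - δ) * ∑ j, s j ^ 2 ≤ ∑ i, (A.mulVec s i) ^ 2 ∧
    ∑ i, (A.mulVec s i) ^ 2 ≤ (1 + δ) * ∑ j, s j ^ 2

/-!
The unknowns are grouped into pairs `(a i, b i)`, and the error is measured by the Euclidean norms
of its pairs, `r i = √((a⁰ i - a* i)² + (b⁰ i - b* i)²)`. Since `max |a⁰ i| |b⁰ i| / f₀` is an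
admissible choice of `x i`, optimality forces `∑ max |a* i| |b* i| ≤ ∑ max |a⁰ i| |b⁰ i|`. As
`max |a⁰ i| |b⁰ i|` exceeds the mean of `|a⁰ i|` and `|b⁰ i|` by at most `γ f₀ / 2`, this becomes a
cone condition: the sum of `r` off `T₀` is at most `√|T₀|` times the ℓ² norm of `r` on `T₀`, plus
`γ |T₀| f₀`.

The usual restricted isometry argument then applies. Let `T₁` carry the `M` largest values of `r`
off `T₀`. Cutting the remaining indices into successive blocks of size `M` in decreasing order
bounds the norm of their image by `√((1 + δ_M) / M)` times the sum of `r` off `T₀`, so the lower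
isometry bound controls the error on `T₀ ∪ T₁`. The rest of the error has ℓ² norm at most `1 / √M`
times the sum of `r` off `T₀`.
-/

lemma l2norm_sq {ι : Type*} [Fintype ι] (v : ι → ℝ) : l2norm v ^ 2 = ∑ i, v i ^ 2 :=
  Real.sq_sqrt (sum_nonneg fun i _ => sq_nonneg (v i))

lemma l2norm_nonneg {ι : Type*} [Fintype ι] (v : ι → ℝ) : 0 ≤ l2norm v :=
  Real.sqrt_nonneg _

lemma l2norm_sub_le {ι : Type*} [Fintype ι] (u v : ι → ℝ) :
    l2norm (u - v) ≤ l2norm u + l2norm v := by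
  have l2norm_eq_norm (w : ι → ℝ) : l2norm w = ‖WithLp.toLp 2 w‖ := by
    simp [l2norm, EuclideanSpace.norm_eq]
  simpa only [l2norm_eq_norm, WithLp.toLp_sub] using norm_sub_le (WithLp.toLp 2 u) (WithLp.toLp 2 v)

section LargestSubset

variable {ι : Type*} [DecidableEq ι]

/-- `T` consists of the indices of the `M` largest values of `r` on `S`, with ties broken
arbitrarily; it is all of `S` if `S` has at most `M` elements. -/
structure IsLargestSubset (r : ι → ℝ) (M : ℕ) (S T : Finset ι) : Prop where
  subset : T ⊆ S
  card_eq : #T = min M #S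
  le_of_mem : ∀ i ∈ T, ∀ j ∈ S \ T, r j ≤ r i

lemma exists_isLargestSubset (r : ι → ℝ) (M : ℕ) (S : Finset ι) :
    ∃ T, IsLargestSubset r M S T := by
  induction M with
  | zero => exact ⟨∅, empty_subset S, by simp, by simp⟩
  | succ M ih =>
    obtain ⟨T, hTS, hcard, hle⟩ := ih
    rcases (S \ T).eq_empty_or_nonempty with hempty | hne
    · have hT : T = S := hTS.antisymm (sdiff_eq_empty_iff_subset.mp hempty)
      subst hT
      exact ⟨T, hTS, by omega, hle⟩
    · obtain ⟨x, hx, hmax⟩ := exists_max_image (S \ T) r hne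
      obtain ⟨hxS, hxT⟩ := mem_sdiff.mp hx
      have hlt : #T < #S := card_lt_card ⟨hTS, fun h => hxT (h hxS)⟩
      refine ⟨insert x T, insert_subset hxS hTS, by rw [card_insert_of_notMem hxT]; omega, ?_⟩
      intro i hi j hj
      have hjT : j ∈ S \ T := sdiff_subset_sdiff subset_rfl (subset_insert x T) hj
      rcases mem_insert.mp hi with rfl | hiT
      · exact hmax j hjT
      · exact hle i hiT j hjT

namespace IsLargestSubset

variable {r : ι → ℝ} {M : ℕ} {S T : Finset ι}

lemma card_le (h : IsLargestSubset r M S T) : #T ≤ M :=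
  h.card_eq.trans_le (min_le_left _ _)

lemma card_eq_of_mem_sdiff (h : IsLargestSubset r M S T) {j : ι} (hj : j ∈ S \ T) : #T = M := by
  have hlt : #T < #S :=
    card_lt_card ⟨h.subset, fun hST => (mem_sdiff.mp hj).2 (hST (mem_sdiff.mp hj).1)⟩
  have := h.card_eq
  omega

lemma card_mul_le_sum (h : IsLargestSubset r M S T) {j : ι} (hj : j ∈ S \ T) :
    M * r j ≤ ∑ i ∈ T, r i := by
  rw [← h.card_eq_of_mem_sdiff hj, ← nsmul_eq_mul]
  exact card_nsmul_le_sum T r (r j) fun i hi => h.le_of_mem i hi j hj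

lemma sqrt_mul_sqrt_sum_sq_le (h : IsLargestSubset r M S T) (hr : ∀ i, 0 ≤ r i) {T' : Finset ι}
    (hT' : T' ⊆ S \ T) (hcard : #T' ≤ M) :
    √M * √(∑ i ∈ T', r i ^ 2) ≤ ∑ i ∈ T, r i := by
  have hsum : 0 ≤ ∑ i ∈ T, r i := sum_nonneg fun i _ => hr i
  rcases M.eq_zero_or_pos with rfl | hM
  · simpa using hsum
  have hMpos : (0 : ℝ) < M := Nat.cast_pos.mpr hM
  rw [← Real.sqrt_mul hMpos.le, Real.sqrt_le_left hsum]
  refine le_of_mul_le_mul_left ?_ hMpos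
  calc (M : ℝ) * (M * ∑ i ∈ T', r i ^ 2) = ∑ i ∈ T', (M * r i) ^ 2 := by
        simp only [mul_pow, ← mul_sum]; ring
    _ ≤ #T' • (∑ i ∈ T, r i) ^ 2 := sum_le_card_nsmul _ _ _ fun j hj =>
        pow_le_pow_left₀ (mul_nonneg hMpos.le (hr j)) (h.card_mul_le_sum (hT' hj)) 2
    _ ≤ M * (∑ i ∈ T, r i) ^ 2 := by
        rw [nsmul_eq_mul]; gcongr

lemma card_mul_sum_sdiff_sq_le (h : IsLargestSubset r M S T) (hr : ∀ i, 0 ≤ r i) :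
    M * ∑ i ∈ S \ T, r i ^ 2 ≤ (∑ i ∈ S, r i) ^ 2 := by
  have hsum (U : Finset ι) : 0 ≤ ∑ i ∈ U, r i := sum_nonneg fun i _ => hr i
  calc M * ∑ i ∈ S \ T, r i ^ 2 = ∑ j ∈ S \ T, M * r j * r j := by
        rw [mul_sum]; exact sum_congr rfl fun _ _ => by ring
    _ ≤ ∑ j ∈ S \ T, (∑ i ∈ T, r i) * r j :=
        sum_le_sum fun j hj => mul_le_mul_of_nonneg_right (h.card_mul_le_sum hj) (hr j)
    _ = (∑ i ∈ T, r i) * ∑ j ∈ S \ T, r j := (mul_sum _ _ _).symm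
    _ ≤ (∑ i ∈ S, r i) ^ 2 := by
        rw [← sum_sdiff h.subset]
        nlinarith [hsum T, hsum (S \ T)]

lemma sqrt_mul_norm_sum_sdiff_le {F : Type*} [SeminormedAddCommGroup F] {f : ι → F} {K : ℝ}
    (hK : 0 ≤ K) (hr : ∀ i, 0 ≤ r i)
    (hf : ∀ U : Finset ι, #U ≤ M → ‖∑ i ∈ U, f i‖ ≤ K * √(∑ i ∈ U, r i ^ 2))
    (h : IsLargestSubset r M S T) :
    √M * ‖∑ i ∈ S \ T, f i‖ ≤ K * ∑ i ∈ S, r i := by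
  have hsum (U : Finset ι) : 0 ≤ ∑ i ∈ U, r i := sum_nonneg fun i _ => hr i
  rcases M.eq_zero_or_pos with rfl | hM
  · simpa using mul_nonneg hK (hsum S)
  induction S using Finset.strongInduction generalizing T with
  | H S ih =>
    rcases (S \ T).eq_empty_or_nonempty with hempty | ⟨j, hj⟩
    · simpa [hempty] using mul_nonneg hK (hsum S)
    have hT : T.Nonempty := by rwa [← card_pos, h.card_eq_of_mem_sdiff hj]
    obtain ⟨T', h'⟩ := exists_isLargestSubset r M (S \ T)
    have hhead : √M * ‖∑ i ∈ T', f i‖ ≤ K * ∑ i ∈ T, r i :=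
      calc √M * ‖∑ i ∈ T', f i‖ ≤ √M * (K * √(∑ i ∈ T', r i ^ 2)) := by
            gcongr; exact hf T' h'.card_le
        _ = K * (√M * √(∑ i ∈ T', r i ^ 2)) := by ring
        _ ≤ K * ∑ i ∈ T, r i := by
            gcongr; exact h.sqrt_mul_sqrt_sum_sq_le hr h'.subset h'.card_le
    have htail : √M * ‖∑ i ∈ (S \ T) \ T', f i‖ ≤ K * ∑ i ∈ S \ T, r i :=
      ih (S \ T) (sdiff_ssubset h.subset hT) h'
    calc √M * ‖∑ i ∈ S \ T, f i‖
        ≤ √M * (‖∑ i ∈ (S \ T) \ T', f i‖ + ‖∑ i ∈ T', f i‖) := by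
          rw [← sum_sdiff h'.subset]; gcongr; exact norm_add_le _ _
      _ ≤ K * (∑ i ∈ S \ T, r i + ∑ i ∈ T, r i) := by linarith
      _ = K * ∑ i ∈ S, r i := by rw [sum_sdiff h.subset]

end IsLargestSubset

end LargestSubset

section RestrictedIsometry

variable {ι F : Type*} [Fintype ι] [DecidableEq ι] [SeminormedAddCommGroup F] {f : ι → F}
  {r : ι → ℝ} {M : ℕ} {T₀ T₁ : Finset ι} {K L E G : ℝ}

lemma compl_sdiff_eq_compl_union (T₀ T₁ : Finset ι) : T₀ᶜ \ T₁ = (T₀ ∪ T₁)ᶜ := by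
  rw [compl_union, sdiff_eq, inf_eq_inter]

lemma IsLargestSubset.sqrt_sum_sq_union_le {τ : ℝ} (hT₁ : IsLargestSubset r M T₀ᶜ T₁)
    (hr : ∀ i, 0 ≤ r i) (hK : 0 ≤ K)
    (hlower : L * √(∑ i ∈ T₀ ∪ T₁, r i ^ 2) ≤ ‖∑ i ∈ T₀ ∪ T₁, f i‖)
    (hupper : ∀ T : Finset ι, #T ≤ M → ‖∑ i ∈ T, f i‖ ≤ K * √(∑ i ∈ T, r i ^ 2))
    (hE : ‖∑ i, f i‖ ≤ E)
    (hcone : ∑ i ∈ T₀ᶜ, r i ≤ τ * √(∑ i ∈ T₀ ∪ T₁, r i ^ 2) + G)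
    (hgap : 0 < √M * L - τ * K) :
    √(∑ i ∈ T₀ ∪ T₁, r i ^ 2) ≤ (√M * E + K * G) / (√M * L - τ * K) := by
  set V := T₀ ∪ T₁ with hV
  set X := √(∑ i ∈ V, r i ^ 2)
  have htail : √M * ‖∑ i ∈ Vᶜ, f i‖ ≤ K * (τ * X + G) := by
    rw [hV, ← compl_sdiff_eq_compl_union]
    exact (hT₁.sqrt_mul_norm_sum_sdiff_le hK hr hupper).trans (by gcongr)
  have hhead : L * X ≤ E + ‖∑ i ∈ Vᶜ, f i‖ :=
    calc L * X ≤ ‖∑ i ∈ V, f i‖ := hlower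
      _ = ‖∑ i, f i - ∑ i ∈ Vᶜ, f i‖ := by rw [← sum_add_sum_compl V f, add_sub_cancel_right]
      _ ≤ E + ‖∑ i ∈ Vᶜ, f i‖ := (norm_sub_le _ _).trans (by gcongr)
  rw [le_div_iff₀ hgap]
  linarith [mul_le_mul_of_nonneg_left hhead (Real.sqrt_nonneg M)]

theorem sum_sq_le_of_restricted_isometry_of_cone {C : ℝ} (hr : ∀ i, 0 ≤ r i) (hK : 0 ≤ K)
    (hlower : ∀ T : Finset ι, #T ≤ M + #T₀ → L * √(∑ i ∈ T, r i ^ 2) ≤ ‖∑ i ∈ T, f i‖)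
    (hupper : ∀ T : Finset ι, #T ≤ M → ‖∑ i ∈ T, f i‖ ≤ K * √(∑ i ∈ T, r i ^ 2))
    (hE : ‖∑ i, f i‖ ≤ E)
    (hcone : ∑ i ∈ T₀ᶜ, r i ≤ √(#T₀) * √(∑ i ∈ T₀, r i ^ 2) + G)
    (hgap : 0 < √M * L - √(#T₀) * K) (hC : C = (√M * E + K * G) / (√M * L - √(#T₀) * K)) :
    ∑ i, r i ^ 2 ≤ (√(#T₀) * C + G) ^ 2 / M + C ^ 2 := by
  have hM : (0 : ℝ) < M := by
    refine Nat.cast_pos.mpr (Nat.pos_of_ne_zero ?_)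
    rintro rfl
    have hT₀K : 0 ≤ √(#T₀) * K := by positivity
    rw [Nat.cast_zero, Real.sqrt_zero, zero_mul] at hgap
    linarith
  obtain ⟨T₁, hT₁⟩ := exists_isLargestSubset r M T₀ᶜ
  have hcard : #(T₀ ∪ T₁) ≤ M + #T₀ := (card_union_le _ _).trans (by linarith [hT₁.card_le])
  have hcone_union : ∑ i ∈ T₀ᶜ, r i ≤ √(#T₀) * √(∑ i ∈ T₀ ∪ T₁, r i ^ 2) + G := by
    refine hcone.trans ?_
    gcongr
    exact subset_union_left
  have hhead : √(∑ i ∈ T₀ ∪ T₁, r i ^ 2) ≤ C :=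
    hC ▸ hT₁.sqrt_sum_sq_union_le hr hK (hlower _ hcard) hupper hE hcone_union hgap
  have hhead_sq : ∑ i ∈ T₀ ∪ T₁, r i ^ 2 ≤ C ^ 2 := (Real.sqrt_le_iff.mp hhead).2
  have htail_sq : ∑ i ∈ (T₀ ∪ T₁)ᶜ, r i ^ 2 ≤ (√(#T₀) * C + G) ^ 2 / M := by
    rw [le_div_iff₀' hM, ← compl_sdiff_eq_compl_union]
    refine (hT₁.card_mul_sum_sdiff_sq_le hr).trans ?_
    have hsum : 0 ≤ ∑ i ∈ T₀ᶜ, r i := sum_nonneg fun i _ => hr i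
    gcongr
    exact hcone_union.trans (by gcongr)
  rw [← sum_compl_add_sum (T₀ ∪ T₁)]
  exact add_le_add htail_sq hhead_sq

end RestrictedIsometry

section PairNorm

variable {ι : Type*}

/-- The Euclidean norm of the pair `(u i, v i)`, the size of a joint error at the index `i`. Pairing
the two signals makes the common support `T₀`, of size `|T₀|` rather than `2 |T₀|`, the support of a
single sparse vector. -/
noncomputable def pairNorm (u v : ι → ℝ) (i : ι) : ℝ :=
  √(u i ^ 2 + v i ^ 2)

lemma pairNorm_nonneg (u v : ι → ℝ) (i : ι) : 0 ≤ pairNorm u v i :=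
  Real.sqrt_nonneg _

lemma pairNorm_sq (u v : ι → ℝ) (i : ι) : pairNorm u v i ^ 2 = u i ^ 2 + v i ^ 2 :=
  Real.sq_sqrt (by positivity)

lemma sqrt_two_mul_pairNorm_le (u v : ι → ℝ) (i : ι) :
    √2 * pairNorm u v i ≤ 2 * max |u i| |v i| := by
  rw [pairNorm, ← Real.sqrt_mul zero_le_two, Real.sqrt_le_left (by positivity)]
  have hu : u i ^ 2 ≤ max |u i| |v i| ^ 2 := by
    rw [← sq_abs (u i)]; gcongr; exact le_max_left _ _
  have hv : v i ^ 2 ≤ max |u i| |v i| ^ 2 := by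
    rw [← sq_abs (v i)]; gcongr; exact le_max_right _ _
  linarith

lemma abs_add_abs_le_sqrt_two_mul_pairNorm (u v : ι → ℝ) (i : ι) :
    |u i| + |v i| ≤ √2 * pairNorm u v i := by
  rw [pairNorm, ← Real.sqrt_mul zero_le_two]
  refine Real.le_sqrt_of_sq_le ?_
  simpa only [sq_abs] using add_sq_le (a := |u i|) (b := |v i|)

lemma sum_le_sqrt_card_mul_sqrt_sum_sq (T : Finset ι) (r : ι → ℝ) :
    ∑ i ∈ T, r i ≤ √(#T) * √(∑ i ∈ T, r i ^ 2) := by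
  rw [← Real.sqrt_mul (Nat.cast_nonneg _)]
  exact Real.le_sqrt_of_sq_le sq_sum_le_card_mul_sum_sq

lemma two_mul_max_abs_le {a b a' b' γ U : ℝ} (hγ₀ : 0 ≤ γ)
    (hγ : (1 - γ) * max |a| |b| ≤ min |a| |b|) (hU : max |a| |b| ≤ U) :
    2 * max |a| |b| ≤ 2 * max |a'| |b'| + (|a - a'| + |b - b'|) + γ * U := by
  have hγU : γ * max |a| |b| ≤ γ * U := by gcongr
  have ha : |a| ≤ max |a'| |b'| + |a - a'| := by
    linarith [abs_sub_abs_le_abs_sub a a', le_max_left |a'| |b'|]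
  have hb : |b| ≤ max |a'| |b'| + |b - b'| := by
    linarith [abs_sub_abs_le_abs_sub b b', le_max_right |a'| |b'|]
  linarith [max_add_min |a| |b|]

theorem sum_compl_pairNorm_le [Fintype ι] [DecidableEq ι] {a b a' b' : ι → ℝ} {T₀ : Finset ι}
    {γ U : ℝ} (hU : 0 ≤ U) (hγ₀ : 0 ≤ γ) (hsupp : ∀ i ∉ T₀, a i = 0 ∧ b i = 0)
    (hγ : ∀ i ∈ T₀, (1 - γ) * max |a i| |b i| ≤ min |a i| |b i|)
    (hle : ∀ i, max |a i| |b i| ≤ U)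
    (hmax : ∑ i, max |a' i| |b' i| ≤ ∑ i, max |a i| |b i|) :
    ∑ i ∈ T₀ᶜ, pairNorm (a - a') (b - b') i ≤
      √(#T₀) * √(∑ i ∈ T₀, pairNorm (a - a') (b - b') i ^ 2) + γ * #T₀ * U := by
  set r := pairNorm (a - a') (b - b')
  have hoff : √2 * ∑ i ∈ T₀ᶜ, r i ≤ 2 * ∑ i ∈ T₀ᶜ, max |a' i| |b' i| := by
    rw [mul_sum, mul_sum]
    refine sum_le_sum fun i hi => (sqrt_two_mul_pairNorm_le _ _ i).trans_eq ?_
    simp [hsupp i (mem_compl.mp hi)]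
  have hon : 2 * ∑ i ∈ T₀, max |a i| |b i| ≤
      2 * ∑ i ∈ T₀, max |a' i| |b' i| + √2 * ∑ i ∈ T₀, r i + γ * #T₀ * U := by
    calc 2 * ∑ i ∈ T₀, max |a i| |b i|
        ≤ ∑ i ∈ T₀, (2 * max |a' i| |b' i| + √2 * r i + γ * U) := by
          rw [mul_sum]
          refine sum_le_sum fun i hi => ?_
          have hmax_le := two_mul_max_abs_le (a' := a' i) (b' := b' i) hγ₀ (hγ i hi) (hle i)
          refine hmax_le.trans ?_
          gcongr
          exact abs_add_abs_le_sqrt_two_mul_pairNorm (a - a') (b - b') i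
      _ = _ := by
          simp only [sum_add_distrib, ← mul_sum, sum_const, nsmul_eq_mul]; ring
  have hsplit : ∑ i ∈ T₀, max |a' i| |b' i| + ∑ i ∈ T₀ᶜ, max |a' i| |b' i| ≤
      ∑ i ∈ T₀, max |a i| |b i| := by
    rw [sum_add_sum_compl, sum_subset (subset_univ T₀) fun i _ hi => by simp [hsupp i hi]]
    exact hmax
  have hG : γ * #T₀ * U ≤ √2 * (γ * #T₀ * U) :=
    le_mul_of_one_le_left (by positivity) (Real.one_le_sqrt.mpr one_le_two)
  have hcone : ∑ i ∈ T₀ᶜ, r i ≤ ∑ i ∈ T₀, r i + γ * #T₀ * U :=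
    le_of_mul_le_mul_left (by linarith) (Real.sqrt_pos.mpr zero_lt_two)
  exact hcone.trans (by gcongr; exact sum_le_sqrt_card_mul_sqrt_sum_sq T₀ r)

end PairNorm

namespace RIPBound

variable {κ κ' ι ι' : Type*} [Fintype κ] [Fintype κ'] [Fintype ι] [Fintype ι'] [DecidableEq ι]
  [DecidableEq ι'] {S : ℕ} {δ : ℝ}

lemma of_fromBlocks_left {Φ : Matrix κ ι ℝ} {Ψ : Matrix κ' ι' ℝ}
    (h : RIPBound (Matrix.fromBlocks Φ 0 0 Ψ) S δ) : RIPBound Φ S δ := by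
  intro T s hT hs
  have hrip := h (T.map .inl) (Sum.elim s 0) (by rwa [card_map]) (by
    rintro (j | j) hj
    · exact hs j fun hjT => hj (mem_map_of_mem _ hjT)
    · rfl)
  simpa [Matrix.fromBlocks_mulVec] using hrip

lemma of_fromBlocks_right {Φ : Matrix κ ι ℝ} {Ψ : Matrix κ' ι' ℝ}
    (h : RIPBound (Matrix.fromBlocks Φ 0 0 Ψ) S δ) : RIPBound Ψ S δ := by
  intro T s hT hs
  have hrip := h (T.map .inr) (Sum.elim 0 s) (by rwa [card_map]) (by
    rintro (j | j) hj
    · rfl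
    · exact hs j fun hjT => hj (mem_map_of_mem _ hjT))
  simpa [Matrix.fromBlocks_mulVec] using hrip

lemma sum_sq_sum {A : Matrix κ ι ℝ} (h : RIPBound A S δ) (s : ι → ℝ) {T : Finset ι}
    (hT : #T ≤ S) :
    (1 - δ) * ∑ j ∈ T, s j ^ 2 ≤ ∑ k, (∑ j ∈ T, A k j * s j) ^ 2 ∧
      ∑ k, (∑ j ∈ T, A k j * s j) ^ 2 ≤ (1 + δ) * ∑ j ∈ T, s j ^ 2 := by
  have hrip := h T (fun j => if j ∈ T then s j else 0) hT fun j hj => if_neg hj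
  simpa [Matrix.mulVec, dotProduct, ite_pow, sum_ite_mem] using hrip

end RIPBound

section JointAtom

variable {κ κ' ι : Type*} [Fintype κ] [Fintype κ']

/-- The contribution of the coefficient pair `(u i, v i)` to the measurement
`diag(Φ, Ψ) [u; v]`. -/
noncomputable def jointAtom (Φ : Matrix κ ι ℝ) (Ψ : Matrix κ' ι ℝ) (u v : ι → ℝ) (i : ι) :
    EuclideanSpace ℝ (κ ⊕ κ') :=
  WithLp.toLp 2 (Sum.elim (fun k => Φ k i * u i) fun k => Ψ k i * v i)

variable (Φ : Matrix κ ι ℝ) (Ψ : Matrix κ' ι ℝ) (u v : ι → ℝ)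

lemma norm_sum_jointAtom_sq (T : Finset ι) :
    ‖∑ i ∈ T, jointAtom Φ Ψ u v i‖ ^ 2 =
      ∑ k, (∑ i ∈ T, Φ k i * u i) ^ 2 + ∑ k, (∑ i ∈ T, Ψ k i * v i) ^ 2 := by
  simp [EuclideanSpace.real_norm_sq_eq, Fintype.sum_sum_type, jointAtom]

variable [Fintype ι]

lemma norm_sum_univ_jointAtom_le :
    ‖∑ i, jointAtom Φ Ψ u v i‖ ≤ l2norm (Φ.mulVec u) + l2norm (Ψ.mulVec v) := by
  have hu := l2norm_nonneg (Φ.mulVec u)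
  have hv := l2norm_nonneg (Ψ.mulVec v)
  have hsq : ‖∑ i, jointAtom Φ Ψ u v i‖ ^ 2 =
      l2norm (Φ.mulVec u) ^ 2 + l2norm (Ψ.mulVec v) ^ 2 := by
    rw [norm_sum_jointAtom_sq, l2norm_sq, l2norm_sq]; rfl
  refine le_of_sq_le_sq ?_ (by positivity)
  nlinarith [mul_nonneg hu hv]

variable [DecidableEq ι] {Φ Ψ} {S : ℕ} {δ : ℝ} {T : Finset ι}

/-- The pairs indexed by `T` involve up to `2 S` columns of the block-diagonal matrix, but at most
`S` in each block, and the blocks can be estimated separately. -/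
lemma RIPBound.norm_sum_jointAtom_sq_bounds (h : RIPBound (Matrix.fromBlocks Φ 0 0 Ψ) S δ)
    (hT : #T ≤ S) :
    (1 - δ) * ∑ i ∈ T, pairNorm u v i ^ 2 ≤ ‖∑ i ∈ T, jointAtom Φ Ψ u v i‖ ^ 2 ∧
      ‖∑ i ∈ T, jointAtom Φ Ψ u v i‖ ^ 2 ≤ (1 + δ) * ∑ i ∈ T, pairNorm u v i ^ 2 := by
  have hΦ := h.of_fromBlocks_left.sum_sq_sum u hT
  have hΨ := h.of_fromBlocks_right.sum_sq_sum v hT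
  simp only [norm_sum_jointAtom_sq, pairNorm_sq, sum_add_distrib, mul_add]
  exact ⟨add_le_add hΦ.1 hΨ.1, add_le_add hΦ.2 hΨ.2⟩

lemma RIPBound.sqrt_mul_le_norm_sum_jointAtom (h : RIPBound (Matrix.fromBlocks Φ 0 0 Ψ) S δ)
    (hT : #T ≤ S) :
    √(1 - δ) * √(∑ i ∈ T, pairNorm u v i ^ 2) ≤ ‖∑ i ∈ T, jointAtom Φ Ψ u v i‖ := by
  rw [← Real.sqrt_mul' _ (by positivity), Real.sqrt_le_left (norm_nonneg _)]
  exact (h.norm_sum_jointAtom_sq_bounds u v hT).1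

lemma RIPBound.norm_sum_jointAtom_le (h : RIPBound (Matrix.fromBlocks Φ 0 0 Ψ) S δ)
    (hT : #T ≤ S) :
    ‖∑ i ∈ T, jointAtom Φ Ψ u v i‖ ≤ √(1 + δ) * √(∑ i ∈ T, pairNorm u v i ^ 2) := by
  rw [← Real.sqrt_mul' _ (by positivity)]
  exact Real.le_sqrt_of_sq_le (h.norm_sum_jointAtom_sq_bounds u v hT).2

end JointAtom

lemma l2norm_mulVec_sub_le {κ ι : Type*} [Fintype κ] [Fintype ι] {Φ : Matrix κ ι ℝ} {y : κ → ℝ}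
    {a a' : ι → ℝ} {ε : ℝ} (ha : l2norm (y - Φ.mulVec a) ≤ ε) (ha' : l2norm (y - Φ.mulVec a') ≤ ε) :
    l2norm (Φ.mulVec (a - a')) ≤ 2 * ε := by
  have heq : Φ.mulVec (a - a') = (y - Φ.mulVec a') - (y - Φ.mulVec a) := by
    rw [Matrix.mulVec_sub]; abel
  rw [heq]
  linarith [l2norm_sub_le (y - Φ.mulVec a') (y - Φ.mulVec a)]

lemma OPT2Optimal.sum_max_abs_le {n N : ℕ} {ΦI ΦD : Matrix (Fin n) (Fin N) ℝ} {yI yD : Fin n → ℝ}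
    {εI εD U : ℝ} {x a b a' b' : Fin N → ℝ} (h : OPT2Optimal ΦI ΦD yI yD εI εD U U x a b)
    (hU : 0 ≤ U) (hI : l2norm (yI - ΦI.mulVec a') ≤ εI) (hD : l2norm (yD - ΦD.mulVec b') ≤ εD)
    (hle : ∀ i, max |a' i| |b' i| ≤ U) :
    ∑ i, max |a i| |b i| ≤ ∑ i, max |a' i| |b' i| := by
  obtain ⟨⟨-, -, -, ha, hb⟩, hmin⟩ := h
  have hcancel (i : Fin N) : U * (max |a' i| |b' i| / U) = max |a' i| |b' i| :=
    mul_div_cancel_of_imp' fun h₀ => le_antisymm (h₀ ▸ hle i) (by positivity)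
  have hfeas : OPT2Feasible ΦI ΦD yI yD εI εD U U (fun i => max |a' i| |b' i| / U) a' b' :=
    ⟨fun i => ⟨by positivity, div_le_one_of_le₀ (hle i) hU⟩, hI, hD,
      fun i => (le_max_left _ _).trans_eq (hcancel i).symm,
      fun i => (le_max_right _ _).trans_eq (hcancel i).symm⟩
  calc ∑ i, max |a i| |b i| ≤ U * ∑ i, x i := by
        rw [mul_sum]; exact sum_le_sum fun i _ => max_le (ha i) (hb i)
    _ ≤ U * ∑ i, (max |a' i| |b' i| / U) := mul_le_mul_of_nonneg_left (hmin _ _ _ hfeas) hU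
    _ = ∑ i, max |a' i| |b' i| := by simp only [mul_sum, hcancel]

section Asymmetry

variable {ι : Type*} {T : Finset ι}

/-- The paper's `γ = 1 - min_{i ∈ T} α_i`, which measures how far the magnitudes of `a` and `b`
differ on `T`. An index with `a i = b i = 0` contributes `0 / 0 = 0` to the minimum. -/
noncomputable def asymmetry (T : Finset ι) (hT : T.Nonempty) (a b : ι → ℝ) : ℝ :=
  1 - T.inf' hT fun i => min |a i| |b i| / max |a i| |b i|

lemma asymmetry_nonneg (hT : T.Nonempty) (a b : ι → ℝ) : 0 ≤ asymmetry T hT a b := by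
  obtain ⟨i, hi⟩ := hT
  refine sub_nonneg.mpr ((inf'_le _ hi).trans ?_)
  exact div_le_one_of_le₀ min_le_max (by positivity)

lemma one_sub_asymmetry_mul_max_le_min (hT : T.Nonempty) (a b : ι → ℝ) {i : ι} (hi : i ∈ T) :
    (1 - asymmetry T hT a b) * max |a i| |b i| ≤ min |a i| |b i| := by
  rw [asymmetry, sub_sub_cancel]
  refine (mul_le_mul_of_nonneg_right (inf'_le _ hi) (by positivity)).trans_eq ?_
  refine div_mul_cancel_of_imp fun h₀ => ?_
  exact le_antisymm (min_le_max.trans_eq h₀) (by positivity)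

end Asymmetry

theorem jbp_recovery_error_bound_general {n N : ℕ} {ΦI ΦD : Matrix (Fin n) (Fin N) ℝ}
    {yI yD : Fin n → ℝ} {εI εD U γ C δM δM' : ℝ} {M : ℕ} {a0 b0 xs as bs : Fin N → ℝ}
    {T0 : Finset (Fin N)} (hU : 0 ≤ U)
    (hsupp : ∀ i, i ∉ T0 → a0 i = 0 ∧ b0 i = 0)
    (hfidI : l2norm (yI - ΦI.mulVec a0) ≤ εI) (hfidD : l2norm (yD - ΦD.mulVec b0) ≤ εD)
    (hbnda : ∀ i, |a0 i| ≤ U) (hbndb : ∀ i, |b0 i| ≤ U)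
    (hopt : OPT2Optimal ΦI ΦD yI yD εI εD U U xs as bs)
    (hγ₀ : 0 ≤ γ) (hγ : ∀ i ∈ T0, (1 - γ) * max |a0 i| |b0 i| ≤ min |a0 i| |b0 i|)
    (hRIP1 : RIPBound (Matrix.fromBlocks ΦI 0 0 ΦD) M δM)
    (hRIP2 : RIPBound (Matrix.fromBlocks ΦI 0 0 ΦD) (M + #T0) δM')
    (hpos : 0 < √(M * (1 - δM')) - √(#T0 * (1 + δM)))
    (hC : C = (2 * (εI + εD) * √M + γ * #T0 * U * √(1 + δM)) /
      (√(M * (1 - δM')) - √(#T0 * (1 + δM)))) :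
    ∑ i, ((a0 i - as i) ^ 2 + (b0 i - bs i) ^ 2) ≤
      #T0 / M * (C + γ * √(#T0) * U) ^ 2 + C ^ 2 := by
  have hle (i : Fin N) : max |a0 i| |b0 i| ≤ U := max_le (hbnda i) (hbndb i)
  have hcone := sum_compl_pairNorm_le hU hγ₀ hsupp hγ hle
    (hopt.sum_max_abs_le hU hfidI hfidD hle)
  have hE : ‖∑ i, jointAtom ΦI ΦD (a0 - as) (b0 - bs) i‖ ≤ 2 * (εI + εD) := by
    obtain ⟨⟨-, hoptI, hoptD, -⟩, -⟩ := hopt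
    linarith [norm_sum_univ_jointAtom_le ΦI ΦD (a0 - as) (b0 - bs),
      l2norm_mulVec_sub_le hfidI hoptI, l2norm_mulVec_sub_le hfidD hoptD]
  rw [Real.sqrt_mul (Nat.cast_nonneg _), Real.sqrt_mul (Nat.cast_nonneg _)] at hpos hC
  have hbound := sum_sq_le_of_restricted_isometry_of_cone (pairNorm_nonneg _ _)
    (Real.sqrt_nonneg _) (fun T hT => hRIP2.sqrt_mul_le_norm_sum_jointAtom _ _ hT)
    (fun T hT => hRIP1.norm_sum_jointAtom_le _ _ hT) hE hcone hpos (hC.trans (by ring))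
  simp only [pairNorm_sq, Pi.sub_apply] at hbound
  have hsq : √(#T0 : ℝ) ^ 2 = #T0 := Real.sq_sqrt (Nat.cast_nonneg _)
  have hfactor : √(#T0) * C + γ * #T0 * U = √(#T0) * (C + γ * √(#T0) * U) := by
    linear_combination -(γ * U) * hsq
  rwa [hfactor, mul_pow, hsq, mul_div_right_comm] at hbound

/-- Recovery-error bound for Joint Basis Pursuit (Theorem 1): if `(a⁰, b⁰)` is supported on
`T₀`, satisfies the data-fidelity constraints with `ε = η f₀` and the magnitude bounds `f₀`,
`(x*, a*, b*)` is an optimal solution of (OPT2) with `U = f₀`, `ε = η f₀`, and the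
block-diagonal matrix `A = diag(Φ^I, Φ^D)` satisfies the restricted isometry inequalities with
constants `δ_M` and `δ_{M+|T₀|}`, then
`‖[a⁰; b⁰] − [a*; b*]‖₂² ≤ [ (|T₀|/M)(C + γ√|T₀|)² + C² ] f₀²`. -/
theorem jbp_recovery_error_bound {n N : ℕ}
    (ΦI ΦD : Matrix (Fin n) (Fin N) ℝ) (yI yD : Fin n → ℝ)
    (f₀ η γ C δM δM' : ℝ) (M : ℕ) (hM : 1 ≤ M)
    (a0 b0 xs as bs : Fin N → ℝ) (T0 : Finset (Fin N)) (hT0ne : T0.Nonempty)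
    (hfI : l2norm yI = f₀) (hfD : l2norm yD = f₀)
    (hη0 : 0 ≤ η) (hη1 : η < 1)
    (hsupp : ∀ i, i ∉ T0 → a0 i = 0 ∧ b0 i = 0)
    (hT0pos : ∀ i ∈ T0, 0 < max |a0 i| |b0 i|)
    (hfidI : l2norm (yI - ΦI.mulVec a0) ≤ η * f₀)
    (hfidD : l2norm (yD - ΦD.mulVec b0) ≤ η * f₀)
    (hbnda : ∀ i, |a0 i| ≤ f₀) (hbndb : ∀ i, |b0 i| ≤ f₀)
    (hopt : OPT2Optimal ΦI ΦD yI yD (η * f₀) (η * f₀) f₀ f₀ xs as bs)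
    (hγ : γ = 1 - T0.inf' hT0ne fun i => min |a0 i| |b0 i| / max |a0 i| |b0 i|)
    (hRIP1 : RIPBound (Matrix.fromBlocks ΦI 0 0 ΦD) M δM)
    (hRIP2 : RIPBound (Matrix.fromBlocks ΦI 0 0 ΦD) (M + T0.card) δM')
    (hpos : 0 < Real.sqrt ((M : ℝ) * (1 - δM')) - Real.sqrt ((T0.card : ℝ) * (1 + δM)))
    (hC : C = (4 * η * Real.sqrt (M : ℝ) + γ * (T0.card : ℝ) * Real.sqrt (1 + δM)) /
        (Real.sqrt ((M : ℝ) * (1 - δM')) - Real.sqrt ((T0.card : ℝ) * (1 + δM)))) :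
    ∑ i, ((a0 i - as i) ^ 2 + (b0 i - bs i) ^ 2) ≤
      (((T0.card : ℝ) / (M : ℝ)) * (C + γ * Real.sqrt (T0.card : ℝ)) ^ 2 + C ^ 2) * f₀ ^ 2 := by
  obtain rfl : γ = asymmetry T0 hT0ne a0 b0 := hγ
  have hbound := jbp_recovery_error_bound_general (C := C * f₀) (hfI ▸ l2norm_nonneg yI) hsupp hfidI
    hfidD hbnda hbndb hopt (asymmetry_nonneg hT0ne a0 b0)
    (fun _ hi => one_sub_asymmetry_mul_max_le_min hT0ne a0 b0 hi) hRIP1 hRIP2 hpos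
    (by rw [hC]; ring)
  exact hbound.trans_eq (by ring)
end

section
/- Let U^I = U^D = U = f₀ and ε^I = ε^D = η f₀ in (OPT2), let (a⁰, b⁰) be supported on T₀ with |a⁰_i| ≤ f₀, |b⁰_i| ≤ f₀ for all i and OPT2-feasible together with x⁰ defined by U x⁰_i = max{|a⁰_i|, |b⁰_i|}, and let (x*, a*, b*) be an optimal solution of (OPT2). Let γ = 1 − min_{i∈T₀} α_i with α_i = min{|a⁰_i|, |b⁰_i|}/max{|a⁰_i|, |b⁰_i|} for i ∈ T₀. Then the error vector h := [a*; b*] − [a⁰; b⁰] ∈ ℝ^{2N} satisfies the cone constraint ‖h_{T₀^C}‖₁ ≤ ‖h_{T₀}‖₁ + γ U |T₀|, where h_{T₀} denotes the components of h (in both the a-part and the b-part) with indices in T₀ and h_{T₀^C} those with indices in the complement of T₀. -/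
open Finset

/-!
Eliminating `x`, (OPT2) with `U^I = U^D` minimises the mixed norm `∑ i, max |a i| |b i|`. Since
`2 max p q = p + q + |p - q|`, twice this mixed norm exceeds the `ℓ¹` norm of `[a; b]` by the total
imbalance `∑ i, ||a i| - |b i||`, so the usual `ℓ¹` cone argument applies to the minimiser up to the
imbalance of `(a⁰, b⁰)` on `T₀`, and each index of `T₀` contributes at most `γ U` to it.
-/

section MixedNorm

variable {ι E F : Type*} [Fintype ι] [SeminormedAddCommGroup E] [SeminormedAddCommGroup F]

/-- The mixed `ℓ^{1,∞}` norm of the pair `(a, b)`: the objective of (OPT2), scaled by the common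
bound `U`, once the indicator `x` is chosen as small as possible. -/
noncomputable def mixedNorm (a : ι → E) (b : ι → F) : ℝ :=
  ∑ i, max ‖a i‖ ‖b i‖

theorem sum_compl_norm_sub_le_add_sum_abs_norm_sub_norm [DecidableEq ι]
    {a a₀ : ι → E} {b b₀ : ι → F} {T : Finset ι}
    (hsupp : ∀ i, i ∉ T → a₀ i = 0 ∧ b₀ i = 0) (hle : mixedNorm a b ≤ mixedNorm a₀ b₀) :
    ∑ i ∈ Tᶜ, (‖a i - a₀ i‖ + ‖b i - b₀ i‖) ≤
      ∑ i ∈ T, (‖a i - a₀ i‖ + ‖b i - b₀ i‖) + ∑ i ∈ T, |‖a₀ i‖ - ‖b₀ i‖| := by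
  have off_support : ∑ i ∈ Tᶜ, (‖a i - a₀ i‖ + ‖b i - b₀ i‖) ≤
      ∑ i ∈ Tᶜ, 2 * (max ‖a i‖ ‖b i‖ - max ‖a₀ i‖ ‖b₀ i‖) := by
    refine sum_le_sum fun i hi => ?_
    obtain ⟨ha₀, hb₀⟩ := hsupp i (mem_compl.1 hi)
    simp only [ha₀, hb₀, sub_zero, norm_zero, max_self]
    linarith [le_max_left ‖a i‖ ‖b i‖, le_max_right ‖a i‖ ‖b i‖]
  have on_support : ∑ i ∈ T, 2 * (max ‖a₀ i‖ ‖b₀ i‖ - max ‖a i‖ ‖b i‖) ≤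
      ∑ i ∈ T, (‖a i - a₀ i‖ + ‖b i - b₀ i‖ + |‖a₀ i‖ - ‖b₀ i‖|) := by
    refine sum_le_sum fun i _ => ?_
    have ha : ‖a₀ i‖ - ‖a i‖ ≤ ‖a i - a₀ i‖ := norm_sub_rev (a i) (a₀ i) ▸ norm_sub_norm_le _ _
    have hb : ‖b₀ i‖ - ‖b i‖ ≤ ‖b i - b₀ i‖ := norm_sub_rev (b i) (b₀ i) ▸ norm_sub_norm_le _ _
    linarith [max_sub_min_eq_abs' ‖a₀ i‖ ‖b₀ i‖, max_add_min ‖a₀ i‖ ‖b₀ i‖,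
      le_max_left ‖a i‖ ‖b i‖, le_max_right ‖a i‖ ‖b i‖]
  have excess_le_deficit : ∑ i ∈ Tᶜ, 2 * (max ‖a i‖ ‖b i‖ - max ‖a₀ i‖ ‖b₀ i‖) ≤
      ∑ i ∈ T, 2 * (max ‖a₀ i‖ ‖b₀ i‖ - max ‖a i‖ ‖b i‖) := by
    simp only [mixedNorm, ← sum_add_sum_compl T] at hle
    simp only [← mul_sum, sum_sub_distrib]
    linarith
  rw [← sum_add_distrib]
  exact off_support.trans (excess_le_deficit.trans on_support)

theorem abs_sub_le_mul_of_one_sub_min_div_max_le {𝕜 : Type*} [Field 𝕜] [LinearOrder 𝕜]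
    [IsStrictOrderedRing 𝕜] {p q γ U : 𝕜} (hpos : 0 < max p q) (hU : max p q ≤ U)
    (hγ : 1 - min p q / max p q ≤ γ) : |p - q| ≤ γ * U := by
  have hγ_nonneg : 0 ≤ γ := by
    have : min p q / max p q ≤ 1 := (div_le_one hpos).2 min_le_max
    linarith
  calc |p - q| = (1 - min p q / max p q) * max p q := by
        rw [← max_sub_min_eq_abs', sub_mul, div_mul_cancel₀ _ hpos.ne', one_mul]
    _ ≤ γ * U := by gcongr

theorem jbp_cone_constraint_general [DecidableEq ι] {a a₀ : ι → E} {b b₀ : ι → F}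
    {U γ : ℝ} {T : Finset ι} (hT : T.Nonempty)
    (hsupp : ∀ i, i ∉ T → a₀ i = 0 ∧ b₀ i = 0)
    (hpos : ∀ i ∈ T, 0 < max ‖a₀ i‖ ‖b₀ i‖)
    (ha₀ : ∀ i, ‖a₀ i‖ ≤ U) (hb₀ : ∀ i, ‖b₀ i‖ ≤ U)
    (hle : mixedNorm a b ≤ mixedNorm a₀ b₀)
    (hγ : γ = 1 - T.inf' hT fun i => min ‖a₀ i‖ ‖b₀ i‖ / max ‖a₀ i‖ ‖b₀ i‖) :
    ∑ i ∈ Tᶜ, (‖a i - a₀ i‖ + ‖b i - b₀ i‖) ≤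
      ∑ i ∈ T, (‖a i - a₀ i‖ + ‖b i - b₀ i‖) + γ * U * (#T : ℝ) := by
  have imbalance_le : ∀ i ∈ T, |‖a₀ i‖ - ‖b₀ i‖| ≤ γ * U := fun i hi => by
    refine abs_sub_le_mul_of_one_sub_min_div_max_le (hpos i hi) (max_le (ha₀ i) (hb₀ i)) ?_
    rw [hγ, sub_le_sub_iff_left]
    exact inf'_le _ hi
  calc ∑ i ∈ Tᶜ, (‖a i - a₀ i‖ + ‖b i - b₀ i‖)
      ≤ ∑ i ∈ T, (‖a i - a₀ i‖ + ‖b i - b₀ i‖) + ∑ i ∈ T, |‖a₀ i‖ - ‖b₀ i‖| :=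
        sum_compl_norm_sub_le_add_sum_abs_norm_sub_norm hsupp hle
    _ ≤ ∑ i ∈ T, (‖a i - a₀ i‖ + ‖b i - b₀ i‖) + γ * U * (#T : ℝ) := by
        grw [sum_le_card_nsmul T _ _ imbalance_le, nsmul_eq_mul, mul_comm (#T : ℝ)]

end MixedNorm

section OPT2

variable {n N : ℕ} {ΦI ΦD : Matrix (Fin n) (Fin N) ℝ} {yI yD : Fin n → ℝ} {εI εD U : ℝ}
  {x a b x' a' b' : Fin N → ℝ}

theorem OPT2Feasible.mixedNorm_le (h : OPT2Feasible ΦI ΦD yI yD εI εD U U x a b) :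
    mixedNorm a b ≤ U * ∑ i, x i := by
  obtain ⟨-, -, -, ha, hb⟩ := h
  rw [mul_sum]
  exact sum_le_sum fun i _ => max_le (ha i) (hb i)

theorem OPT2Optimal.mixedNorm_le (hU : 0 ≤ U)
    (hopt : OPT2Optimal ΦI ΦD yI yD εI εD U U x a b)
    (hfeas : OPT2Feasible ΦI ΦD yI yD εI εD U U x' a' b')
    (hx' : ∀ i, U * x' i = max |a' i| |b' i|) :
    mixedNorm a b ≤ mixedNorm a' b' :=
  calc mixedNorm a b ≤ U * ∑ i, x i := hopt.1.mixedNorm_le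
    _ ≤ U * ∑ i, x' i := mul_le_mul_of_nonneg_left (hopt.2 x' a' b' hfeas) hU
    _ = mixedNorm a' b' := by simp only [mixedNorm, Real.norm_eq_abs, mul_sum, hx']

end OPT2

/-- Cone constraint on the error vector `h = [a*; b*] − [a⁰; b⁰]` (Lemma 3): if `(a⁰, b⁰)` is
supported on `T₀`, bounded by `f₀`, and OPT2-feasible together with `x⁰` defined by
`f₀ x⁰_i = max |a⁰_i| |b⁰_i|`, and `(x*, a*, b*)` is an optimal solution of (OPT2) with
`U = f₀` and `ε = η f₀`, then `‖h_{T₀ᶜ}‖₁ ≤ ‖h_{T₀}‖₁ + γ f₀ |T₀|`. -/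
theorem jbp_cone_constraint {n N : ℕ}
    (ΦI ΦD : Matrix (Fin n) (Fin N) ℝ) (yI yD : Fin n → ℝ)
    (f₀ η γ : ℝ) (hf₀ : 0 < f₀) (hη0 : 0 ≤ η) (hη1 : η < 1)
    (a0 b0 x0 xs as bs : Fin N → ℝ) (T0 : Finset (Fin N)) (hT0ne : T0.Nonempty)
    (hsupp : ∀ i, i ∉ T0 → a0 i = 0 ∧ b0 i = 0)
    (hT0pos : ∀ i ∈ T0, 0 < max |a0 i| |b0 i|)
    (hbnda : ∀ i, |a0 i| ≤ f₀) (hbndb : ∀ i, |b0 i| ≤ f₀)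
    (hx0 : ∀ i, f₀ * x0 i = max |a0 i| |b0 i|)
    (hfeas : OPT2Feasible ΦI ΦD yI yD (η * f₀) (η * f₀) f₀ f₀ x0 a0 b0)
    (hopt : OPT2Optimal ΦI ΦD yI yD (η * f₀) (η * f₀) f₀ f₀ xs as bs)
    (hγ : γ = 1 - T0.inf' hT0ne fun i => min |a0 i| |b0 i| / max |a0 i| |b0 i|) :
    ∑ i ∈ T0ᶜ, (|as i - a0 i| + |bs i - b0 i|) ≤
      ∑ i ∈ T0, (|as i - a0 i| + |bs i - b0 i|) + γ * f₀ * (T0.card : ℝ) := by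
  exact jbp_cone_constraint_general hT0ne hsupp hT0pos hbnda hbndb
    (hopt.mixedNorm_le hf₀.le hfeas hx0) hγ
end

section
/- Let a*, b* ∈ ℝ^N, U > 0, and define x* by U x*_i = max{|a*_i|, |b*_i|} for all i. Let a⁰, b⁰ ∈ ℝ^N be supported on T₀ with max{|a⁰_i|, |b⁰_i|} > 0 for i ∈ T₀, satisfy |a⁰_i| ≤ U and |b⁰_i| ≤ U, define x⁰ by U x⁰_i = max{|a⁰_i|, |b⁰_i|}, and let γ = 1 − min_{i∈T₀} α_i where α_i = min{|a⁰_i|, |b⁰_i|}/max{|a⁰_i|, |b⁰_i|}. If ‖x*‖₁ ≤ ‖x⁰‖₁, then ‖[a*; b*]‖₁ ≤ 2U‖x⁰‖₁ ≤ ‖[a⁰; b⁰]‖₁ + γ U |T₀|. -/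
open Finset

/-!
Since `max u v + min u v = u + v`, the quantity `2 max u v` exceeds `u + v` by the gap
`max u v - min u v`, which for `(u, v) = (|a⁰_i|, |b⁰_i|)` equals `(1 - α_i) max u v` and so is at
most `γ max u v`. Summing over the coordinates gives `2U‖x⁰‖₁ ≤ ‖[a⁰; b⁰]‖₁ + γU‖x⁰‖₁`, and
`U‖x⁰‖₁ ≤ U|T₀|` because the terms vanish off `T₀` and are at most `U` on it.
-/

theorem sum_le_card_nsmul_of_eq_zero_off {ι M : Type*} [Fintype ι] [AddCommMonoid M]
    [PartialOrder M] [IsOrderedAddMonoid M] {T : Finset ι} {f : ι → M} {U : M}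
    (hzero : ∀ i ∉ T, f i = 0) (hle : ∀ i ∈ T, f i ≤ U) : ∑ i, f i ≤ #T • U := by
  rw [← sum_subset (subset_univ T) fun i _ => hzero i]
  exact sum_le_card_nsmul T f U hle

section OrderedRing

variable {ι R : Type*} [CommRing R] [LinearOrder R] [IsStrictOrderedRing R]

theorem sum_add_le_two_mul_sum_max (s : Finset ι) (f g : ι → R) :
    ∑ i ∈ s, (f i + g i) ≤ 2 * ∑ i ∈ s, max (f i) (g i) := by
  rw [mul_sum]
  refine sum_le_sum fun i _ => ?_
  rw [two_mul]
  exact add_le_add (le_max_left _ _) (le_max_right _ _)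

theorem two_mul_sum_max_le_sum_add {s : Finset ι} {f g : ι → R} {γ : R}
    (hgap : ∀ i ∈ s, max (f i) (g i) - min (f i) (g i) ≤ γ * max (f i) (g i)) :
    2 * ∑ i ∈ s, max (f i) (g i) ≤ ∑ i ∈ s, (f i + g i) + γ * ∑ i ∈ s, max (f i) (g i) := by
  rw [mul_sum, mul_sum, ← sum_add_distrib]
  refine sum_le_sum fun i hi => ?_
  linarith [hgap i hi, min_add_max (f i) (g i)]

theorem mul_sum_abs_eq_sum_max_abs {s : Finset ι} {a b x : ι → R} {U : R} (hU : 0 ≤ U)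
    (hx : ∀ i ∈ s, U * x i = max |a i| |b i|) :
    U * ∑ i ∈ s, |x i| = ∑ i ∈ s, max |a i| |b i| := by
  rw [mul_sum]
  refine sum_congr rfl fun i hi => ?_
  have hUx : 0 ≤ U * x i := hx i hi ▸ le_max_of_le_left (abs_nonneg _)
  calc U * |x i| = |U * x i| := by rw [abs_mul, abs_of_nonneg hU]
    _ = U * x i := abs_of_nonneg hUx
    _ = max |a i| |b i| := hx i hi

theorem l1_norm_relation_general [Fintype ι] {as bs a0 b0 xs x0 : ι → R} {T0 : Finset ι} {U γ : R}
    (hU : 0 ≤ U) (hxs : ∀ i, U * xs i = max |as i| |bs i|)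
    (hsupp : ∀ i, i ∉ T0 → a0 i = 0 ∧ b0 i = 0)
    (hbnda : ∀ i, |a0 i| ≤ U) (hbndb : ∀ i, |b0 i| ≤ U)
    (hx0 : ∀ i, U * x0 i = max |a0 i| |b0 i|) (hγ : 0 ≤ γ)
    (hgap : ∀ i ∈ T0, max |a0 i| |b0 i| - min |a0 i| |b0 i| ≤ γ * max |a0 i| |b0 i|)
    (hle : ∑ i, |xs i| ≤ ∑ i, |x0 i|) :
    ∑ i, (|as i| + |bs i|) ≤ 2 * U * (∑ i, |x0 i|) ∧
    2 * U * (∑ i, |x0 i|) ≤ (∑ i, (|a0 i| + |b0 i|)) + γ * U * (#T0 : R) := by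
  have hxs_norm : U * ∑ i, |xs i| = ∑ i, max |as i| |bs i| :=
    mul_sum_abs_eq_sum_max_abs hU fun i _ => hxs i
  have hx0_norm : U * ∑ i, |x0 i| = ∑ i, max |a0 i| |b0 i| :=
    mul_sum_abs_eq_sum_max_abs hU fun i _ => hx0 i
  have hgap_univ : ∀ i ∈ univ, max |a0 i| |b0 i| - min |a0 i| |b0 i| ≤ γ * max |a0 i| |b0 i| := by
    intro i _
    by_cases hi : i ∈ T0
    · exact hgap i hi
    · simp [hsupp i hi]
  have hcard : ∑ i, max |a0 i| |b0 i| ≤ #T0 • U :=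
    sum_le_card_nsmul_of_eq_zero_off (fun i hi => by simp [hsupp i hi])
      fun i _ => max_le (hbnda i) (hbndb i)
  rw [mul_assoc]
  constructor
  · calc ∑ i, (|as i| + |bs i|)
      _ ≤ 2 * ∑ i, max |as i| |bs i| := sum_add_le_two_mul_sum_max _ _ _
      _ = 2 * (U * ∑ i, |xs i|) := by rw [hxs_norm]
      _ ≤ 2 * (U * ∑ i, |x0 i|) := by gcongr
  · calc 2 * (U * ∑ i, |x0 i|)
      _ = 2 * ∑ i, max |a0 i| |b0 i| := by rw [hx0_norm]
      _ ≤ ∑ i, (|a0 i| + |b0 i|) + γ * ∑ i, max |a0 i| |b0 i| :=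
        two_mul_sum_max_le_sum_add hgap_univ
      _ ≤ ∑ i, (|a0 i| + |b0 i|) + γ * (#T0 • U) := by gcongr
      _ = ∑ i, (|a0 i| + |b0 i|) + γ * U * #T0 := by rw [nsmul_eq_mul, mul_assoc, mul_comm U]

end OrderedRing

section OrderedField

variable {ι K : Type*} [Field K] [LinearOrder K] [IsStrictOrderedRing K]
  {s : Finset ι} {f g : ι → K}

theorem inf'_min_div_max_le_one (hs : s.Nonempty) (hpos : ∀ i ∈ s, 0 < max (f i) (g i)) :
    s.inf' hs (fun i => min (f i) (g i) / max (f i) (g i)) ≤ 1 :=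
  let ⟨i, hi⟩ := hs
  inf'_le_of_le _ hi ((div_le_one (hpos i hi)).2 min_le_max)

theorem max_sub_min_le_one_sub_inf'_mul_max (hs : s.Nonempty)
    (hpos : ∀ i ∈ s, 0 < max (f i) (g i)) : ∀ i ∈ s, max (f i) (g i) - min (f i) (g i) ≤
      (1 - s.inf' hs fun j => min (f j) (g j) / max (f j) (g j)) * max (f i) (g i) := by
  intro i hi
  have hratio : (s.inf' hs fun j => min (f j) (g j) / max (f j) (g j)) * max (f i) (g i) ≤
      min (f i) (g i) :=
    (le_div_iff₀ (hpos i hi)).1 (inf'_le _ hi)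
  rw [one_sub_mul]
  exact sub_le_sub_left hratio _

end OrderedField

/-- Chain of ℓ1-norm inequalities (Eq. (28)): if `x*` is defined from `(a*, b*)` by
`U x*_i = max |a*_i| |b*_i|`, the ground truth `(a⁰, b⁰)` is supported on `T₀`, bounded by `U`,
with `x⁰` defined by `U x⁰_i = max |a⁰_i| |b⁰_i|`, and `‖x*‖₁ ≤ ‖x⁰‖₁`, then
`‖[a*; b*]‖₁ ≤ 2U ‖x⁰‖₁ ≤ ‖[a⁰; b⁰]‖₁ + γ U |T₀|`. -/
theorem l1_norm_relation {N : ℕ}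
    (as bs a0 b0 xs x0 : Fin N → ℝ) (T0 : Finset (Fin N)) (hT0ne : T0.Nonempty)
    (U γ : ℝ) (hU : 0 < U)
    (hxs : ∀ i, U * xs i = max |as i| |bs i|)
    (hsupp : ∀ i, i ∉ T0 → a0 i = 0 ∧ b0 i = 0)
    (hT0pos : ∀ i ∈ T0, 0 < max |a0 i| |b0 i|)
    (hbnda : ∀ i, |a0 i| ≤ U) (hbndb : ∀ i, |b0 i| ≤ U)
    (hx0 : ∀ i, U * x0 i = max |a0 i| |b0 i|)
    (hγ : γ = 1 - T0.inf' hT0ne fun i => min |a0 i| |b0 i| / max |a0 i| |b0 i|)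
    (hle : ∑ i, |xs i| ≤ ∑ i, |x0 i|) :
    ∑ i, (|as i| + |bs i|) ≤ 2 * U * (∑ i, |x0 i|) ∧
    2 * U * (∑ i, |x0 i|) ≤ (∑ i, (|a0 i| + |b0 i|)) + γ * U * (T0.card : ℝ) := by
  subst hγ
  exact l1_norm_relation_general hU.le hxs hsupp hbnda hbndb hx0
    (sub_nonneg.2 (inf'_min_div_max_le_one hT0ne hT0pos))
    (max_sub_min_le_one_sub_inf'_mul_max hT0ne hT0pos) hle
end

section
/- Let h be a real vector indexed by a finite set, let T₀ be an index subset, and let T₁, …, T_K be a partition of the complement T₀^C into blocks each of cardinality at most M (M a positive integer), ordered so that each component in T_{j+1} is bounded by the average of the components of T_j: |h_t| ≤ ‖h_{T_j}‖₁ / M for all t ∈ T_{j+1} and all 1 ≤ j ≤ K−1. Then Σ_{j=2}^{K} ‖h_{T_j}‖₂ ≤ ‖h_{T₀^C}‖₁ / √M. -/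
open Finset

/-!
A block of at most `M` entries of size at most `a` has `ℓ²` norm at most `√M * a`. Taking for `a`
the average `‖h_{T_j}‖₁ / M` over the preceding block gives `‖h_{T_{j+1}}‖₂ ≤ ‖h_{T_j}‖₁ / √M`, and
it remains to sum over `j`.
-/

section Block

variable {ι E : Type*} [SeminormedAddGroup E] {f : ι → E} {M : ℝ}

lemma sqrt_sum_norm_sq_le_sqrt_mul {s : Finset ι} {a : ℝ} (ha : 0 ≤ a) (hcard : #s ≤ M)
    (hf : ∀ i ∈ s, ‖f i‖ ≤ a) : √(∑ i ∈ s, ‖f i‖ ^ 2) ≤ √M * a := by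
  have hsum : ∑ i ∈ s, ‖f i‖ ^ 2 ≤ M * a ^ 2 :=
    calc ∑ i ∈ s, ‖f i‖ ^ 2 ≤ #s • a ^ 2 :=
          sum_le_card_nsmul _ _ _ fun i hi ↦ pow_le_pow_left₀ (norm_nonneg _) (hf i hi) 2
      _ = #s * a ^ 2 := nsmul_eq_mul _ _
      _ ≤ M * a ^ 2 := by gcongr
  calc √(∑ i ∈ s, ‖f i‖ ^ 2) ≤ √(M * a ^ 2) := Real.sqrt_le_sqrt hsum
    _ = √M * a := by rw [Real.sqrt_mul' M (sq_nonneg a), Real.sqrt_sq ha]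

lemma sqrt_sum_norm_sq_le_sum_norm_div_sqrt {s t : Finset ι} (hM : 0 < M) (hcard : #t ≤ M)
    (hf : ∀ i ∈ t, ‖f i‖ ≤ (∑ j ∈ s, ‖f j‖) / M) :
    √(∑ i ∈ t, ‖f i‖ ^ 2) ≤ (∑ j ∈ s, ‖f j‖) / √M :=
  calc √(∑ i ∈ t, ‖f i‖ ^ 2) ≤ √M * ((∑ j ∈ s, ‖f j‖) / M) :=
        sqrt_sum_norm_sq_le_sqrt_mul (by positivity) hcard hf
    _ = (∑ j ∈ s, ‖f j‖) / √M := by rw [mul_div_left_comm, Real.sqrt_div_self', mul_one_div]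

end Block

theorem sum_block_l2_le_general {ι E : Type*} [SeminormedAddGroup E] (h : ι → E) {M : ℝ}
    (hM : 0 < M) (K : ℕ) (T : ℕ → Finset ι) (hcard : ∀ j ∈ Icc 2 K, #(T j) ≤ M)
    (horder : ∀ j, 1 ≤ j → j + 1 ≤ K → ∀ t ∈ T (j + 1), ‖h t‖ ≤ (∑ s ∈ T j, ‖h s‖) / M) :
    ∑ j ∈ Icc 2 K, √(∑ t ∈ T j, ‖h t‖ ^ 2) ≤ (∑ j ∈ Icc 1 K, ∑ t ∈ T j, ‖h t‖) / √M := by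
  have hblock : ∀ j ∈ Ico 1 K, √(∑ t ∈ T (j + 1), ‖h t‖ ^ 2) ≤ (∑ t ∈ T j, ‖h t‖) / √M := by
    intro j hj
    obtain ⟨h1j, hjK⟩ := mem_Ico.mp hj
    exact sqrt_sum_norm_sq_le_sum_norm_div_sqrt hM
      (hcard (j + 1) (mem_Icc.mpr ⟨by lia, hjK⟩)) (horder j h1j hjK)
  calc ∑ j ∈ Icc 2 K, √(∑ t ∈ T j, ‖h t‖ ^ 2)
      = ∑ j ∈ Ico 1 K, √(∑ t ∈ T (j + 1), ‖h t‖ ^ 2) := by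
        rw [sum_Ico_add' (fun j ↦ √(∑ t ∈ T j, ‖h t‖ ^ 2)), Ico_add_one_right_eq_Icc]
    _ ≤ ∑ j ∈ Ico 1 K, (∑ t ∈ T j, ‖h t‖) / √M := sum_le_sum hblock
    _ = (∑ j ∈ Ico 1 K, ∑ t ∈ T j, ‖h t‖) / √M := (sum_div _ _ _).symm
    _ ≤ (∑ j ∈ Icc 1 K, ∑ t ∈ T j, ‖h t‖) / √M := by
        gcongr
        exact Ico_subset_Icc_self

/-- If `T₁, …, T_K` is a partition of `T₀ᶜ` into blocks of cardinality at most `M`, ordered so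
that each component of `h` on `T_{j+1}` is bounded by the average of the components of `h` on
`T_j`, then `Σ_{j=2}^{K} ‖h_{T_j}‖₂ ≤ ‖h_{T₀ᶜ}‖₁ / √M`. -/
theorem sum_block_l2_le {ι : Type*} [Fintype ι] [DecidableEq ι] (h : ι → ℝ)
    (T0 : Finset ι) (M K : ℕ) (hM : 0 < M) (T : ℕ → Finset ι)
    (hpart : T0ᶜ = (Finset.Icc 1 K).biUnion T)
    (hdisj : (↑(Finset.Icc 1 K) : Set ℕ).PairwiseDisjoint T)
    (hcard : ∀ j ∈ Finset.Icc 1 K, (T j).card ≤ M)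
    (horder : ∀ j, 1 ≤ j → j + 1 ≤ K →
      ∀ t ∈ T (j + 1), |h t| ≤ (∑ s ∈ T j, |h s|) / (M : ℝ)) :
    ∑ j ∈ Finset.Icc 2 K, Real.sqrt (∑ t ∈ T j, h t ^ 2) ≤
      (∑ t ∈ T0ᶜ, |h t|) / Real.sqrt (M : ℝ) := by
  have hcard' : ∀ j ∈ Icc 2 K, (#(T j) : ℝ) ≤ M := fun j hj ↦
    mod_cast hcard j (Icc_subset_Icc_left one_le_two hj)
  rw [hpart, sum_biUnion hdisj]
  simpa using sum_block_l2_le_general h (Nat.cast_pos.mpr hM) K T hcard' horder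
end

section
/- Let A ∈ ℝ^{m×n} satisfy the restricted isometry property with constants δ_M (for sets of size ≤ M) and δ_{M+|T₀|} (for sets of size ≤ M + |T₀|). Let h ∈ ℝ^n, let T₀ ⊆ {1,…,n} and let T₁, …, T_K be a partition of T₀^C into blocks of cardinality at most M, and set T₀₁ = T₀ ∪ T₁. Then ‖Ah‖₂ ≥ √(1 − δ_{M+|T₀|}) ‖h_{T₀₁}‖₂ − √(1 + δ_M) Σ_{j=2}^{K} ‖h_{T_j}‖₂ ≥ √(1 − δ_{M+|T₀|}) ‖h_{T₀}‖₂ − √(1 + δ_M) Σ_{j=2}^{K} ‖h_{T_j}‖₂. -/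
open Finset

/-! Splitting off one covering block at a time, the triangle inequality and the upper RIP bound give
`‖A h_S‖ ≤ √(1 + δ) ∑ j, ‖h_{T j}‖` whenever the blocks `T j` cover `S`; overlaps only enlarge the
right-hand side. With `S` the complement of `T₀₁`, the lower RIP bound for `h_{T₀₁}` and the
reverse triangle inequality for `A h = A h_{T₀₁} + A h_S` give the claim. -/

open scoped Matrix

section EuclideanNorm

variable {ι : Type*} [Fintype ι]

lemma l2norm_eq_norm (v : ι → ℝ) : l2norm v = ‖WithLp.toLp 2 v‖ := by
  simp [l2norm, EuclideanSpace.norm_eq]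

lemma l2norm_zero : l2norm (0 : ι → ℝ) = 0 := by
  simp [l2norm]

lemma l2norm_add_le (v w : ι → ℝ) : l2norm (v + w) ≤ l2norm v + l2norm w := by
  simpa only [l2norm_eq_norm, WithLp.toLp_add] using norm_add_le _ _

lemma l2norm_sub_le_l2norm_add (v w : ι → ℝ) : l2norm v - l2norm w ≤ l2norm (v + w) := by
  simpa only [l2norm_eq_norm, WithLp.toLp_add] using norm_sub_le_norm_add _ _

lemma l2norm_indicator (S : Finset ι) (h : ι → ℝ) :
    l2norm ((S : Set ι).indicator h) = √(∑ t ∈ S, h t ^ 2) := by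
  classical
  simp [l2norm, Set.indicator_apply, ite_pow]

lemma l2norm_indicator_mono {S T : Set ι} (hST : S ⊆ T) (h : ι → ℝ) :
    l2norm (S.indicator h) ≤ l2norm (T.indicator h) := by
  refine Real.sqrt_le_sqrt (sum_le_sum fun t _ => sq_le_sq.2 ?_)
  simpa only [Real.norm_eq_abs] using norm_indicator_le_of_subset hST h t

end EuclideanNorm

namespace RIPBound

variable {κ ι : Type*} [Fintype κ] [Fintype ι] [DecidableEq ι] {A : Matrix κ ι ℝ}
  {M N : ℕ} {δ δ' : ℝ}

lemma l2norm_mulVec_le (hA : RIPBound A M δ) {T : Finset ι} (hT : #T ≤ M) {s : ι → ℝ}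
    (hs : ∀ j ∉ T, s j = 0) : l2norm (A *ᵥ s) ≤ √(1 + δ) * l2norm s := by
  rw [l2norm, l2norm, ← Real.sqrt_mul' _ (sum_nonneg fun j _ => sq_nonneg (s j))]
  exact Real.sqrt_le_sqrt (hA T s hT hs).2

lemma le_l2norm_mulVec (hA : RIPBound A M δ) {T : Finset ι} (hT : #T ≤ M) {s : ι → ℝ}
    (hs : ∀ j ∉ T, s j = 0) : √(1 - δ) * l2norm s ≤ l2norm (A *ᵥ s) := by
  rw [l2norm, l2norm, ← Real.sqrt_mul' _ (sum_nonneg fun j _ => sq_nonneg (s j))]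
  exact Real.sqrt_le_sqrt (hA T s hT hs).1

lemma l2norm_mulVec_indicator_le_sum (hA : RIPBound A M δ) (h : ι → ℝ) {α : Type*}
    {J : Finset α} {T : α → Finset ι} (hcard : ∀ j ∈ J, #(T j) ≤ M)
    {S : Set ι} (hS : S ⊆ J.biUnion T) :
    l2norm (A *ᵥ S.indicator h) ≤ √(1 + δ) * ∑ j ∈ J, l2norm ((T j : Set ι).indicator h) := by
  classical
  induction J using Finset.induction_on generalizing S with
  | empty =>
    obtain rfl : S = ∅ := by simpa using hS
    rw [Set.indicator_empty', Matrix.mulVec_zero, l2norm_zero, sum_empty, mul_zero]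
  | insert j J hj ih =>
    have hblock : l2norm (A *ᵥ (S ∩ T j).indicator h) ≤
        √(1 + δ) * l2norm ((T j : Set ι).indicator h) :=
      (hA.l2norm_mulVec_le (hcard j (mem_insert_self j J)) fun t ht =>
        Set.indicator_of_notMem (fun htS => ht htS.2) h).trans <|
        mul_le_mul_of_nonneg_left (l2norm_indicator_mono Set.inter_subset_right h)
          (Real.sqrt_nonneg _)
    have hrest : l2norm (A *ᵥ (S \ T j).indicator h) ≤
        √(1 + δ) * ∑ i ∈ J, l2norm ((T i : Set ι).indicator h) := by
      refine ih (fun i hi => hcard i (mem_insert_of_mem hi)) (Set.sdiff_subset_iff.2 ?_)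
      rwa [biUnion_insert, coe_union] at hS
    have hsplit : S.indicator h = (S ∩ T j).indicator h + (S \ T j).indicator h := by
      conv_lhs => rw [← Set.inter_union_sdiff S (T j)]
      exact Set.indicator_union_of_disjoint Set.disjoint_sdiff_inter.symm h
    calc l2norm (A *ᵥ S.indicator h)
        ≤ l2norm (A *ᵥ (S ∩ T j).indicator h) + l2norm (A *ᵥ (S \ T j).indicator h) := by
          rw [hsplit, Matrix.mulVec_add]
          exact l2norm_add_le _ _
      _ ≤ √(1 + δ) * ∑ i ∈ insert j J, l2norm ((T i : Set ι).indicator h) := by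
          rw [sum_insert hj, mul_add]
          exact add_le_add hblock hrest

lemma sub_sum_le_l2norm_mulVec (hM : RIPBound A M δ) (hN : RIPBound A N δ') (h : ι → ℝ)
    {S : Finset ι} (hS : #S ≤ N) {α : Type*} {J : Finset α} {T : α → Finset ι}
    (hcover : Sᶜ ⊆ J.biUnion T) (hcard : ∀ j ∈ J, #(T j) ≤ M) :
    √(1 - δ') * l2norm ((S : Set ι).indicator h) -
        √(1 + δ) * ∑ j ∈ J, l2norm ((T j : Set ι).indicator h) ≤ l2norm (A *ᵥ h) := by
  have hlower : √(1 - δ') * l2norm ((S : Set ι).indicator h) ≤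
      l2norm (A *ᵥ (S : Set ι).indicator h) :=
    hN.le_l2norm_mulVec hS fun _ ht => Set.indicator_of_notMem (mt mem_coe.1 ht) h
  have hupper : l2norm (A *ᵥ (S : Set ι)ᶜ.indicator h) ≤
      √(1 + δ) * ∑ j ∈ J, l2norm ((T j : Set ι).indicator h) :=
    hM.l2norm_mulVec_indicator_le_sum h hcard (by rw [← coe_compl]; exact coe_subset.2 hcover)
  calc _ ≤ l2norm (A *ᵥ (S : Set ι).indicator h) - l2norm (A *ᵥ (S : Set ι)ᶜ.indicator h) :=
        sub_le_sub hlower hupper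
    _ ≤ l2norm (A *ᵥ (S : Set ι).indicator h + A *ᵥ (S : Set ι)ᶜ.indicator h) :=
        l2norm_sub_le_l2norm_add _ _
    _ = l2norm (A *ᵥ h) := by rw [← Matrix.mulVec_add, Set.indicator_self_add_compl]

end RIPBound

theorem rip_lower_bound_on_Ah_general {κ ι α : Type*} [Fintype κ] [Fintype ι] [DecidableEq ι]
    [DecidableEq α] {A : Matrix κ ι ℝ} {T0 : Finset ι} {M : ℕ} {δM δ' : ℝ}
    (hRIP1 : RIPBound A M δM) (hRIP2 : RIPBound A (M + #T0) δ') (h : ι → ℝ)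
    {J : Finset α} {T : α → Finset ι} (hcover : T0ᶜ ⊆ J.biUnion T)
    (hcard : ∀ j ∈ J, #(T j) ≤ M) {j₁ : α} (hj₁ : j₁ ∈ J) :
    √(1 - δ') * √(∑ t ∈ T0 ∪ T j₁, h t ^ 2) -
        √(1 + δM) * ∑ j ∈ J.erase j₁, √(∑ t ∈ T j, h t ^ 2) ≤ l2norm (A *ᵥ h) ∧
    √(1 - δ') * √(∑ t ∈ T0, h t ^ 2) -
        √(1 + δM) * ∑ j ∈ J.erase j₁, √(∑ t ∈ T j, h t ^ 2) ≤
      √(1 - δ') * √(∑ t ∈ T0 ∪ T j₁, h t ^ 2) -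
        √(1 + δM) * ∑ j ∈ J.erase j₁, √(∑ t ∈ T j, h t ^ 2) := by
  have hcard_union : #(T0 ∪ T j₁) ≤ M + #T0 :=
    (card_union_le _ _).trans (by linarith [hcard j₁ hj₁])
  have hcover_erase : (T0 ∪ T j₁)ᶜ ⊆ (J.erase j₁).biUnion T := by
    rw [← insert_erase hj₁, biUnion_insert] at hcover
    rw [compl_union, ← sdiff_eq_inter_compl]
    exact sdiff_le_iff.2 hcover
  simp only [← l2norm_indicator]
  refine ⟨hRIP1.sub_sum_le_l2norm_mulVec hRIP2 h hcard_union hcover_erase fun j hj =>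
    hcard j (mem_of_mem_erase hj), ?_⟩
  gcongr
  exact l2norm_indicator_mono (coe_subset.2 subset_union_left) h

/-- Restricted-isometry lower bound on `‖Ah‖₂` (Eq. (32)): if `A` satisfies the RIP with
constants `δ_M` (level `M`) and `δ'` (level `M + |T₀|`), and `T₁, …, T_K` is a partition of
`T₀ᶜ` into blocks of cardinality at most `M`, with `T₀₁ = T₀ ∪ T₁`, then
`‖Ah‖₂ ≥ √(1 − δ') ‖h_{T₀₁}‖₂ − √(1 + δ_M) Σ_{j=2}^{K} ‖h_{T_j}‖₂
       ≥ √(1 − δ') ‖h_{T₀}‖₂ − √(1 + δ_M) Σ_{j=2}^{K} ‖h_{T_j}‖₂`. -/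
theorem rip_lower_bound_on_Ah {m n : ℕ} (A : Matrix (Fin m) (Fin n) ℝ)
    (T0 : Finset (Fin n)) (M K : ℕ) (hM : 0 < M) (hK : 1 ≤ K) (δM δ' : ℝ)
    (hRIP1 : RIPBound A M δM) (hRIP2 : RIPBound A (M + T0.card) δ')
    (h : Fin n → ℝ) (T : ℕ → Finset (Fin n))
    (hpart : T0ᶜ = (Finset.Icc 1 K).biUnion T)
    (hdisj : (↑(Finset.Icc 1 K) : Set ℕ).PairwiseDisjoint T)
    (hcard : ∀ j ∈ Finset.Icc 1 K, (T j).card ≤ M) :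
    Real.sqrt (1 - δ') * Real.sqrt (∑ t ∈ T0 ∪ T 1, h t ^ 2) -
        Real.sqrt (1 + δM) * ∑ j ∈ Finset.Icc 2 K, Real.sqrt (∑ t ∈ T j, h t ^ 2) ≤
      l2norm (A.mulVec h) ∧
    Real.sqrt (1 - δ') * Real.sqrt (∑ t ∈ T0, h t ^ 2) -
        Real.sqrt (1 + δM) * ∑ j ∈ Finset.Icc 2 K, Real.sqrt (∑ t ∈ T j, h t ^ 2) ≤
      Real.sqrt (1 - δ') * Real.sqrt (∑ t ∈ T0 ∪ T 1, h t ^ 2) -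
        Real.sqrt (1 + δM) * ∑ j ∈ Finset.Icc 2 K, Real.sqrt (∑ t ∈ T j, h t ^ 2) := by
  rw [show Icc 2 K = (Icc 1 K).erase 1 from (Icc_erase_left 1 K).symm]
  exact rip_lower_bound_on_Ah_general hRIP1 hRIP2 h hpart.subset hcard (left_mem_Icc.2 hK)
end
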